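/- arXiv:1809.10759 — 4 statements merged into one kernel-verified Lean document; each statement's English description precedes it below -/
import Mathlib

section
/- For every dimension n ≥ 2 and every M > 0 there exists a constant C = C(n,M) with the following property: if φ ∈ C^∞(B₁), where B₁ is the open unit ball in ℝⁿ, solves the minimal surface equation div(∇φ/√(1+|∇φ|²)) = 0 on B₁ and satisfies |φ| ≤ M on B₁, then |∇φ| ≤ C on the concentric ball B_{1/2} of radius 1/2. -/
/-!
The proof is Korevaar's maximum principle argument. Write `W = √(1 + |∇φ|²)`, let
`ψ(x) = c (φ(x) - M) + R² - |x|²` with `c = 1 / (4M)` and `R = 9/10`, and let `η = exp (K ψ) - 1`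
with `K` large depending on `n` and `M`. The function `η W` attains its maximum over the closed
ball of radius `R` at a point `x₀`. Since `ψ ≤ 0` for `|x| = R` and `ψ ≥ 3/50` on `B_{1/2}`, the
point `x₀` is interior and `η(x₀) > 0`. It suffices to bound `|∇φ(x₀)|`
(`slope_bound_at_max`): then `max η W` is bounded, and dividing by `η` bounds `W` on `B_{1/2}`.

Let `s = |∇φ(x₀)|`, `∇φ(x₀) = s e` and `w = ∂_e φ`. Because `√(1 + w²) ≤ W` with equality at `x₀`,
the function `η √(1 + w²)` also has a local maximum at `x₀`, and its second order condition is
(`second_order_at_max`)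
`D²η / η + w D²w / (1 + w²) + (1 - 2w²) / (1 + w²)² dw ⊗ dw ≤ 0`.
Take the trace of this form against `g = I - ∇φ ⊗ ∇φ / W²`. The minimal surface equation in the
nondivergence form `tr_g D²φ = 0` (`minimal_nondivergence`) and its derivative in the direction `e`
(`minimal_linearized`) give `tr_g D²w = 2s / (1 + s²) |dw|_g²`, so the terms in `w` add up to
`|dw|_g² / (1 + s²)² ≥ 0` and hence `tr_g D²η ≤ 0`. On the other hand
`tr_g D²η = K exp (K ψ) (tr_g D²ψ + K |dψ|_g²)` with `tr_g D²ψ ≥ -2n`, and `|dψ|_g² ≥ c² / 8` as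
soon as `s ≥ max 1 (4 / c)`; this is impossible when `K c² / 8 > 2n` (`no_large_slope`).
-/

open MeasureTheory Metric Set Filter

/-- Divergence of a vector field on `ℝⁿ`. -/
noncomputable def ediv (n : ℕ)
    (F : EuclideanSpace ℝ (Fin n) → EuclideanSpace ℝ (Fin n))
    (x : EuclideanSpace ℝ (Fin n)) : ℝ :=
  ∑ i : Fin n, fderiv ℝ F x (EuclideanSpace.single i 1) i

open scoped Topology RealInnerProductSpace

/-! ### Second order conditions on the line -/

/-- The second derivative is nonpositive at a local maximum, stated with an explicit first derivative
near the point. -/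
lemma second_deriv_nonpos {g g' : ℝ → ℝ} {g2 : ℝ} (hmax : IsLocalMax g 0)
    (h1 : ∀ᶠ t in 𝓝 (0 : ℝ), HasDerivAt g (g' t) t) (h2 : HasDerivAt g' g2 0) : g2 ≤ 0 := by
  by_contra hpos
  push Not at hpos
  have hd : deriv g =ᶠ[𝓝 0] g' := h1.mono fun t ht => ht.deriv
  have hdd : deriv (deriv g) 0 = g2 := by rw [hd.deriv_eq, h2.deriv]
  have hmin : IsLocalMin g 0 :=
    isLocalMin_of_deriv_deriv_pos (by rwa [hdd]) hmax.deriv_eq_zero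
      h1.self_of_nhds.continuousAt
  have hc : g =ᶠ[𝓝 0] fun _ => g 0 := by
    filter_upwards [hmin, hmax] with t a b using le_antisymm b a
  have h0 : deriv (deriv g) 0 = 0 := by
    rw [hc.deriv.deriv_eq]; simp
  linarith

/-- Second order condition at a local maximum of `f √(1 + w²)` on the line: it is that of
`log f + log (1 + w²) / 2`, where `f'` has been eliminated by the first order condition
`f' / f = - w w' / (1 + w²)`. -/
lemma weighted_max_second_order {f f₁ w w₁ : ℝ → ℝ} {f₂ w₂ : ℝ}
    (hf : ∀ᶠ t in 𝓝 (0 : ℝ), HasDerivAt f (f₁ t) t) (hf₁ : HasDerivAt f₁ f₂ 0)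
    (hw : ∀ᶠ t in 𝓝 (0 : ℝ), HasDerivAt w (w₁ t) t) (hw₁ : HasDerivAt w₁ w₂ 0)
    (hpos : 0 < f 0) (hmax : IsLocalMax (fun t => f t * √(1 + w t ^ 2)) 0) :
    f₂ / f 0 + w 0 * w₂ / (1 + w 0 ^ 2)
      + (1 - 2 * w 0 ^ 2) / (1 + w 0 ^ 2) ^ 2 * w₁ 0 ^ 2 ≤ 0 := by
  have hfpos : ∀ᶠ t in 𝓝 (0 : ℝ), 0 < f t :=
    hf.self_of_nhds.continuousAt.eventually (lt_mem_nhds hpos)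
  have hV : ∀ t, 0 < 1 + w t ^ 2 := fun t => by positivity
  have hlog : IsLocalMax (fun t => Real.log (f t) + Real.log (1 + w t ^ 2) / 2) 0 := by
    filter_upwards [hfpos, hmax] with t ht hm
    have key : ∀ r, 0 < f r → Real.log (f r) + Real.log (1 + w r ^ 2) / 2
        = Real.log (f r * √(1 + w r ^ 2)) := fun r hr => by
      rw [Real.log_mul hr.ne' (Real.sqrt_pos.2 (hV r)).ne', Real.log_sqrt (hV r).le]
    rw [key t ht, key 0 hpos]
    exact Real.log_le_log (mul_pos ht (Real.sqrt_pos.2 (hV t))) hm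
  have hL1 : ∀ᶠ t in 𝓝 (0 : ℝ), HasDerivAt
      (fun t => Real.log (f t) + Real.log (1 + w t ^ 2) / 2)
      (f₁ t / f t + w t * w₁ t / (1 + w t ^ 2)) t := by
    filter_upwards [hfpos, hf, hw] with t ht h1 h2
    have := (h1.log ht.ne').add ((((h2.pow 2).const_add 1).log (hV t).ne').div_const 2)
    refine this.congr_deriv ?_
    have := (hV t).ne'
    simp
    field_simp
  have hf0 := hf.self_of_nhds
  have hw0 := hw.self_of_nhds
  have hL2 := (hf₁.div hf0 hpos.ne').add ((hw0.mul hw₁).div ((hw0.pow 2).const_add 1) (hV 0).ne')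
  have h1 := hlog.hasDerivAt_eq_zero hL1.self_of_nhds
  have h2 := second_deriv_nonpos hlog hL1 hL2
  have hsq : (f₁ 0 / f 0) ^ 2 = (w 0 * w₁ 0 / (1 + w 0 ^ 2)) ^ 2 := by
    rw [eq_neg_of_add_eq_zero_left h1]; ring
  refine le_trans (le_of_eq ?_) h2
  have e1 : (f₂ * f 0 - f₁ 0 * f₁ 0) / f 0 ^ 2 = f₂ / f 0 - (f₁ 0 / f 0) ^ 2 := by
    have := hpos.ne'
    field_simp
  have := (hV 0).ne'
  simp only [Pi.mul_apply, Pi.pow_apply]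
  rw [e1, hsq]
  simp
  field_simp
  ring

/-! ### Algebra of the maximum principle -/

/-- Trace of `B` against `I - (1 - (1 - α)²) e ⊗ e`, written as a sum of values of `B` on the
diagonal. The matrix is the square of `I - α e ⊗ e`, which is applied to the vectors of `b`; hence
a form that is nonpositive on the diagonal has nonpositive trace. -/
lemma sum_stretched {n : ℕ} (b : OrthonormalBasis (Fin n) ℝ (EuclideanSpace ℝ (Fin n)))
    (B : EuclideanSpace ℝ (Fin n) →L[ℝ] EuclideanSpace ℝ (Fin n) →L[ℝ] ℝ)
    (e : EuclideanSpace ℝ (Fin n)) (he : ‖e‖ = 1) (α : ℝ) :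
    ∑ k, B (b k - (α * ⟪e, b k⟫) • e) (b k - (α * ⟪e, b k⟫) • e)
      = ∑ k, B (b k) (b k) - (1 - (1 - α) ^ 2) * B e e := by
  have hs : ∑ k, ⟪e, b k⟫ • b k = e := by
    simpa only [real_inner_comm] using b.sum_repr' e
  have h1 : ∑ k, ⟪e, b k⟫ * B e (b k) = B e e := by
    simpa only [map_sum, map_smul, smul_eq_mul] using congrArg (B e) hs
  have h2 : ∑ k, ⟪e, b k⟫ * B (b k) e = B e e := by
    simpa only [map_sum, map_smul, smul_eq_mul, sum_apply, smul_apply]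
      using congrArg (fun v => B v e) hs
  have h3 : ∑ k, ⟪e, b k⟫ * ⟪e, b k⟫ = 1 := by
    have := b.sum_inner_mul_inner e e
    rw [real_inner_self_eq_norm_sq, he] at this
    simpa [real_inner_comm] using this
  have h4 : ∀ k, B (b k - (α * ⟪e, b k⟫) • e) (b k - (α * ⟪e, b k⟫) • e)
      = B (b k) (b k) - α * (⟪e, b k⟫ * B (b k) e) - α * (⟪e, b k⟫ * B e (b k))
        + α ^ 2 * B e e * (⟪e, b k⟫ * ⟪e, b k⟫) := fun k => by
    simp only [map_sub, map_smul, sub_apply, smul_apply, smul_eq_mul]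
    ring
  simp only [h4, Finset.sum_add_distrib, Finset.sum_sub_distrib, ← Finset.mul_sum, h1, h2, h3]
  ring

/-- Pointwise algebra of the maximum principle. Here `A` is the Hessian of `φ`, `s • e` its gradient,
`h` the gradient of `∂_e φ`, `T` the Hessian of `∂_e φ`, `X = exp (K ψ)` and `η = X - 1`. The
equation `hPDE`, its linearization `hLin` and the second order conditions `hQ` are incompatible
with a slope `s ≥ max 1 (4 / c)`. -/
lemma no_large_slope {n : ℕ} (b : OrthonormalBasis (Fin n) ℝ (EuclideanSpace ℝ (Fin n)))
    (x e h : EuclideanSpace ℝ (Fin n)) (s c K X η : ℝ)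
    (A T : EuclideanSpace ℝ (Fin n) →L[ℝ] EuclideanSpace ℝ (Fin n) →L[ℝ] ℝ)
    (he : ‖e‖ = 1) (hs : 1 ≤ s) (hcs : 4 ≤ c * s) (hx : ‖x‖ ≤ 1)
    (hK : 0 < K) (hX : 0 < X) (hη : 0 < η) (hc : 0 < c) (hKc : 2 * n < K * (c ^ 2 / 8))
    (hh : ∀ d, A d e = ⟪h, d⟫)
    (hPDE : (1 + s ^ 2) * ∑ k, A (b k) (b k) = s ^ 2 * A e e)
    (hLin : 2 * s * A e e * ∑ k, A (b k) (b k) + (1 + s ^ 2) * ∑ k, T (b k) (b k)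
      - s ^ 2 * T e e - 2 * s * ‖h‖ ^ 2 = 0)
    (hQ : ∀ d, K * X * (c * A d d - 2 * ⟪d, d⟫ + K * (c * (s * ⟪e, d⟫) - 2 * ⟪x, d⟫) ^ 2) / η
      + s * T d d / (1 + s ^ 2) + (1 - 2 * s ^ 2) / (1 + s ^ 2) ^ 2 * ⟪h, d⟫ ^ 2 ≤ 0) :
    False := by
  have hV : 0 < 1 + s ^ 2 := by positivity
  -- With this `α`, the matrix `(I - α e ⊗ e)²` is the inverse metric `I - s² / (1 + s²) e ⊗ e`.
  set α : ℝ := 1 - 1 / √(1 + s ^ 2) with hα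
  have hα2 : 1 - (1 - α) ^ 2 = s ^ 2 / (1 + s ^ 2) := by
    rw [hα, sub_sub_cancel, div_pow, Real.sq_sqrt hV.le]
    field_simp
    ring
  -- `l` is the gradient of `ψ`.
  set l : EuclideanSpace ℝ (Fin n) := (c * s) • e - (2 : ℝ) • x with hl
  have hln : c * s / 2 ≤ ‖l‖ := by
    have h1 := norm_sub_norm_le ((c * s) • e) ((2 : ℝ) • x)
    rw [norm_smul, norm_smul, he, Real.norm_of_nonneg (by positivity), Real.norm_two] at h1
    linarith
  have hinn : ∀ v : EuclideanSpace ℝ (Fin n), ∑ k, ⟪v, b k⟫ * ⟪v, b k⟫ = ‖v‖ ^ 2 := fun v => by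
    have := b.sum_inner_mul_inner v v
    rw [real_inner_self_eq_norm_sq] at this
    simpa [real_inner_comm] using this
  have hee : ⟪e, e⟫ = (1 : ℝ) := by rw [real_inner_self_eq_norm_sq, he, one_pow]
  have sA := sum_stretched b A e he α
  have sT := sum_stretched b T e he α
  have sI : ∑ k, ⟪b k - (α * ⟪e, b k⟫) • e, b k - (α * ⟪e, b k⟫) • e⟫
      = ∑ k, ⟪b k, b k⟫ - (1 - (1 - α) ^ 2) * ⟪e, e⟫ :=
    sum_stretched b (innerSL ℝ) e he α
  have sl := sum_stretched b ((innerSL ℝ l).smulRight (innerSL ℝ l)) e he α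
  have sh := sum_stretched b ((innerSL ℝ h).smulRight (innerSL ℝ h)) e he α
  have hbb : ∀ k, ⟪b k, b k⟫ = (1 : ℝ) := fun k => by
    rw [real_inner_self_eq_norm_sq, b.norm_eq_one, one_pow]
  simp only [ContinuousLinearMap.smulRight_apply, innerSL_apply_apply, smul_apply, smul_eq_mul,
    hinn, hα2, hbb, hee, Finset.sum_const, Finset.card_univ, Fintype.card_fin, nsmul_eq_mul,
    mul_one] at sA sT sI sl sh
  set d : Fin n → EuclideanSpace ℝ (Fin n) := fun k => b k - (α * ⟪e, b k⟫) • e with hd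
  have hsum := Finset.sum_nonpos fun k (_ : k ∈ Finset.univ) => hQ (d k)
  have hl' : ∀ v, c * (s * ⟪e, v⟫) - 2 * ⟪x, v⟫ = ⟪l, v⟫ := fun v => by
    rw [hl, inner_sub_left, real_inner_smul_left, real_inner_smul_left]; ring
  have hsplit : ∑ k, (K * X * (c * A (d k) (d k) - 2 * ⟪d k, d k⟫
      + K * (c * (s * ⟪e, d k⟫) - 2 * ⟪x, d k⟫) ^ 2) / η
      + s * T (d k) (d k) / (1 + s ^ 2) + (1 - 2 * s ^ 2) / (1 + s ^ 2) ^ 2 * ⟪h, d k⟫ ^ 2)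
      = K * X / η * (c * ∑ k, A (d k) (d k) - 2 * ∑ k, ⟪d k, d k⟫
        + K * ∑ k, ⟪l, d k⟫ * ⟪l, d k⟫) + s / (1 + s ^ 2) * ∑ k, T (d k) (d k)
        + (1 - 2 * s ^ 2) / (1 + s ^ 2) ^ 2 * ∑ k, ⟪h, d k⟫ * ⟪h, d k⟫ := by
    simp only [Finset.mul_sum, ← Finset.sum_add_distrib, ← Finset.sum_sub_distrib, hl']
    refine Finset.sum_congr rfl fun k _ => ?_
    ring
  rw [hsplit] at hsum
  have hAe : A e e = ⟪h, e⟫ := hh e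
  have tA : ∑ k, A (d k) (d k) = 0 := by
    rw [sA]; field_simp; linarith
  have tI : ∑ k, ⟪d k, d k⟫ ≤ n := by
    rw [sI]; have : 0 ≤ s ^ 2 / (1 + s ^ 2) := by positivity
    linarith
  have tl : c ^ 2 / 8 ≤ ∑ k, ⟪l, d k⟫ * ⟪l, d k⟫ := by
    rw [sl]
    have h1 : ⟪l, e⟫ * ⟪l, e⟫ ≤ ‖l‖ ^ 2 := by
      have := abs_real_inner_le_norm l e
      rw [he, mul_one] at this
      rw [← sq, ← sq_abs]; gcongr
    have h2 : s ^ 2 / (1 + s ^ 2) * (⟪l, e⟫ * ⟪l, e⟫) ≤ s ^ 2 / (1 + s ^ 2) * ‖l‖ ^ 2 := by gcongr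
    have h3 : (c * s / 2) ^ 2 ≤ ‖l‖ ^ 2 := by gcongr
    have h4 : ‖l‖ ^ 2 - s ^ 2 / (1 + s ^ 2) * ‖l‖ ^ 2 = ‖l‖ ^ 2 / (1 + s ^ 2) := by
      field_simp; ring
    have h5 : c ^ 2 / 8 ≤ ‖l‖ ^ 2 / (1 + s ^ 2) := by
      rw [le_div_iff₀ hV]
      have hs2 : 0 ≤ s ^ 2 - 1 := sub_nonneg.2 (one_le_pow₀ hs)
      have hcs2 : 0 ≤ c ^ 2 * (s ^ 2 - 1) := mul_nonneg (sq_nonneg c) hs2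
      refine le_trans ?_ h3
      linarith
    linarith
  set H : ℝ := ∑ k, ⟪h, d k⟫ * ⟪h, d k⟫ with hH
  have hH0 : 0 ≤ H := Finset.sum_nonneg fun k _ => mul_self_nonneg _
  have hTr : ∑ k, A (b k) (b k) = s ^ 2 / (1 + s ^ 2) * A e e := by
    field_simp; linarith
  -- The linearized equation: the trace of the Hessian of `∂_e φ` is a multiple of the squared
  -- metric length `H` of its gradient.
  have tT : ∑ k, T (d k) (d k) = 2 * s / (1 + s ^ 2) * H := by
    rw [sT, sh, ← hAe]
    rw [hTr] at hLin
    have : (1 + s ^ 2) * (∑ k, T (b k) (b k) - s ^ 2 / (1 + s ^ 2) * T e e)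
      = 2 * s * (‖h‖ ^ 2 - s ^ 2 / (1 + s ^ 2) * (A e e * A e e)) := by
      have : (1 + s ^ 2) * (s ^ 2 / (1 + s ^ 2) * T e e) = s ^ 2 * T e e := by field_simp
      rw [mul_sub, this]; linarith
    rw [div_mul_eq_mul_div (2 * s), eq_div_iff hV.ne', mul_comm, this]
  rw [tA, tT] at hsum
  have h6 : s / (1 + s ^ 2) * (2 * s / (1 + s ^ 2) * H) + (1 - 2 * s ^ 2) / (1 + s ^ 2) ^ 2 * H
      = H / (1 + s ^ 2) ^ 2 := by field_simp; ring
  have h7 : 0 ≤ H / (1 + s ^ 2) ^ 2 := by positivity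
  have h8 : K * (c ^ 2 / 8) ≤ K * ∑ k, ⟪l, d k⟫ * ⟪l, d k⟫ := by gcongr
  have h9 : 0 < K * X / η * (c * 0 - 2 * ∑ k, ⟪d k, d k⟫ + K * ∑ k, ⟪l, d k⟫ * ⟪l, d k⟫) :=
    mul_pos (by positivity) (by linarith)
  linarith

/-! ### The minimal surface equation and its linearization -/

lemma gradient_eq_sum {n : ℕ} (b : OrthonormalBasis (Fin n) ℝ (EuclideanSpace ℝ (Fin n)))
    (φ : EuclideanSpace ℝ (Fin n) → ℝ) (x : EuclideanSpace ℝ (Fin n)) :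
    gradient φ x = ∑ k, fderiv ℝ φ x (b k) • b k := by
  rw [← b.sum_repr' (gradient φ x)]
  refine Finset.sum_congr rfl fun k _ => ?_
  rw [real_inner_comm, gradient, InnerProductSpace.toDual_symm_apply]

/-- The derivative of `∇φ` is the operator representing the Hessian of `φ`. -/
lemma hasFDerivAt_gradient {n : ℕ} {φ : EuclideanSpace ℝ (Fin n) → ℝ}
    {x : EuclideanSpace ℝ (Fin n)} (h : DifferentiableAt ℝ (fderiv ℝ φ) x) :
    ∃ L : EuclideanSpace ℝ (Fin n) →L[ℝ] EuclideanSpace ℝ (Fin n),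
      HasFDerivAt (gradient φ) L x ∧ ∀ a d, ⟪L a, d⟫ = fderiv ℝ (fderiv ℝ φ) x a d := by
  classical
  set b := EuclideanSpace.basisFun (Fin n) ℝ
  have h1 : gradient φ = fun y => ∑ k, fderiv ℝ φ y (b k) • b k :=
    funext fun y => gradient_eq_sum b φ y
  have h2 : HasFDerivAt (fun y => ∑ k, fderiv ℝ φ y (b k) • b k) _ x :=
    HasFDerivAt.fun_sum (u := Finset.univ) fun k _ =>
      (h.hasFDerivAt.clm_apply (hasFDerivAt_const (b k) x)).smul_const (b k)
  refine ⟨_, h1 ▸ h2, fun a d => ?_⟩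
  have hd : ∑ k, ⟪b k, d⟫ • b k = d := b.sum_repr' d
  have := congrArg (fderiv ℝ (fderiv ℝ φ) x a) hd
  simp only [map_sum, map_smul, smul_eq_mul] at this
  rw [← this]
  simp [sum_inner, real_inner_smul_left, mul_comm]

/-- Nondivergence form of the minimal surface equation: `(1 + |∇φ|²) Δφ = D²φ(∇φ, ∇φ)`. -/
lemma minimal_nondivergence {n : ℕ} {φ : EuclideanSpace ℝ (Fin n) → ℝ}
    {x : EuclideanSpace ℝ (Fin n)} (h : DifferentiableAt ℝ (fderiv ℝ φ) x)
    (hdiv : ∑ i : Fin n, fderiv ℝ (fun y => (√(1 + ‖gradient φ y‖ ^ 2))⁻¹ • gradient φ y) x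
      (EuclideanSpace.single i 1) i = 0) :
    (1 + ‖gradient φ x‖ ^ 2) * ∑ k, fderiv ℝ (fderiv ℝ φ) x
        (EuclideanSpace.basisFun (Fin n) ℝ k) (EuclideanSpace.basisFun (Fin n) ℝ k)
      = fderiv ℝ (fderiv ℝ φ) x (gradient φ x) (gradient φ x) := by
  obtain ⟨L, hL, hLi⟩ := hasFDerivAt_gradient h
  set b := EuclideanSpace.basisFun (Fin n) ℝ with hb
  set p := gradient φ x with hp
  have hV : 0 < 1 + ‖p‖ ^ 2 := by positivity
  set r := √(1 + ‖p‖ ^ 2) with hr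
  have hr0 : 0 < r := Real.sqrt_pos.2 hV
  have hr2 : r ^ 2 = 1 + ‖p‖ ^ 2 := Real.sq_sqrt hV.le
  have hS : HasFDerivAt (fun y => √(1 + ‖gradient φ y‖ ^ 2)) _ x :=
    (hL.norm_sq.const_add 1).sqrt hV.ne'
  have hI := (hasDerivAt_inv hr0.ne').comp_hasFDerivAt x hS
  have hF : HasFDerivAt (fun y => (√(1 + ‖gradient φ y‖ ^ 2))⁻¹ • gradient φ y) _ x :=
    hI.smul hL
  rw [hF.fderiv] at hdiv
  have hbk : ∀ k, b k = EuclideanSpace.single k 1 := fun k => by simp [hb]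
  have hcoord : ∀ (v : EuclideanSpace ℝ (Fin n)) k, v k = ⟪v, b k⟫ := fun v k => by
    rw [hbk, EuclideanSpace.inner_single_right]; simp
  have hterm : ∀ k, r⁻¹ * fderiv ℝ (fderiv ℝ φ) x (b k) (b k)
      - (r ^ 3)⁻¹ * (⟪b k, p⟫ * fderiv ℝ (fderiv ℝ φ) x (b k) p) =
      ((r⁻¹ • L + ((-(r ^ 2)⁻¹) • ((1 / (2 * r)) • 2 • (innerSL ℝ p) ∘SL L)).smulRight p)
        (EuclideanSpace.single k 1)) k := fun k => by
    rw [← hbk, hcoord, ← hLi, ← hLi, real_inner_comm p (b k)]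
    simp [inner_add_left, real_inner_smul_right, real_inner_comm]
    field_simp
    ring
  have hs : ∑ k, ⟪b k, p⟫ • b k = p := b.sum_repr' p
  have h1 : ∑ k, ⟪b k, p⟫ * fderiv ℝ (fderiv ℝ φ) x (b k) p
      = fderiv ℝ (fderiv ℝ φ) x p p := by
    simpa only [map_sum, map_smul, smul_eq_mul, sum_apply, smul_apply]
      using congrArg (fun v => fderiv ℝ (fderiv ℝ φ) x v p) hs
  have h2 := (Finset.sum_congr rfl fun k _ => hterm k).trans hdiv
  rw [Finset.sum_sub_distrib, ← Finset.mul_sum, ← Finset.mul_sum, h1] at h2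
  rw [← hr2]
  field_simp at h2
  linarith

/-- Derivative in the direction `e` of the nondivergence form of the minimal surface equation; `L` is
the derivative of `∇φ`. -/
lemma minimal_linearized {n : ℕ} {φ : EuclideanSpace ℝ (Fin n) → ℝ}
    (b : OrthonormalBasis (Fin n) ℝ (EuclideanSpace ℝ (Fin n)))
    {x : EuclideanSpace ℝ (Fin n)} (h2 : DifferentiableAt ℝ (fderiv ℝ (fderiv ℝ φ)) x)
    {L : EuclideanSpace ℝ (Fin n) →L[ℝ] EuclideanSpace ℝ (Fin n)}
    (hL : HasFDerivAt (gradient φ) L x)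
    (hPDE : ∀ᶠ y in 𝓝 x, (1 + ‖gradient φ y‖ ^ 2) * ∑ k, fderiv ℝ (fderiv ℝ φ) y (b k) (b k)
      = fderiv ℝ (fderiv ℝ φ) y (gradient φ y) (gradient φ y))
    (e : EuclideanSpace ℝ (Fin n)) :
    2 * ⟪gradient φ x, L e⟫ * ∑ k, fderiv ℝ (fderiv ℝ φ) x (b k) (b k)
      + (1 + ‖gradient φ x‖ ^ 2) * ∑ k, fderiv ℝ (fderiv ℝ (fderiv ℝ φ)) x e (b k) (b k)
      = fderiv ℝ (fderiv ℝ (fderiv ℝ φ)) x e (gradient φ x) (gradient φ x)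
        + fderiv ℝ (fderiv ℝ φ) x (L e) (gradient φ x)
        + fderiv ℝ (fderiv ℝ φ) x (gradient φ x) (L e) := by
  classical
  have hl := (hL.norm_sq.const_add 1).mul (HasFDerivAt.fun_sum (u := Finset.univ) fun k _ =>
    ((h2.hasFDerivAt.clm_apply (hasFDerivAt_const (b k) x)).clm_apply (hasFDerivAt_const (b k) x)))
  have hr := ((h2.hasFDerivAt.clm_apply hL).clm_apply hL)
  have := congrArg (fun f => f e) ((hl.congr_of_eventuallyEq (EventuallyEq.symm hPDE)).unique hr)
  simp at this ⊢
  linarith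

/-! ### The gradient at a maximum point -/

lemma smooth_facts {n : ℕ} {φ : EuclideanSpace ℝ (Fin n) → ℝ}
    (hφ : ContDiffOn ℝ (⊤ : ℕ∞) φ (ball 0 1))
    {y : EuclideanSpace ℝ (Fin n)} (hy : y ∈ ball (0 : EuclideanSpace ℝ (Fin n)) 1) :
    DifferentiableAt ℝ φ y ∧ DifferentiableAt ℝ (fderiv ℝ φ) y
      ∧ DifferentiableAt ℝ (fderiv ℝ (fderiv ℝ φ)) y
      ∧ (∀ a d, fderiv ℝ (fderiv ℝ φ) y a d = fderiv ℝ (fderiv ℝ φ) y d a)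
      ∧ ∀ a d, fderiv ℝ (fderiv ℝ (fderiv ℝ φ)) y a d
        = fderiv ℝ (fderiv ℝ (fderiv ℝ φ)) y d a := by
  have hD1 : ContDiffOn ℝ (⊤ : ℕ∞) (fderiv ℝ φ) (ball 0 1) :=
    hφ.fderiv_of_isOpen isOpen_ball (by simp)
  have hD2 : ContDiffOn ℝ (⊤ : ℕ∞) (fderiv ℝ (fderiv ℝ φ)) (ball 0 1) :=
    hD1.fderiv_of_isOpen isOpen_ball (by simp)
  have hnhds := isOpen_ball.mem_nhds hy
  have h2 : minSmoothness ℝ 2 ≤ ((⊤ : ℕ∞) : WithTop ℕ∞) := by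
    rw [minSmoothness_of_isRCLikeNormedField]
    exact WithTop.coe_le_coe.2 (le_top : (2 : ℕ∞) ≤ ⊤)
  exact ⟨(hφ.contDiffAt hnhds).differentiableAt (by simp),
    (hD1.contDiffAt hnhds).differentiableAt (by simp),
    (hD2.contDiffAt hnhds).differentiableAt (by simp),
    ((hφ.contDiffAt hnhds).isSymmSndFDerivAt h2).eq,
    ((hD1.contDiffAt hnhds).isSymmSndFDerivAt h2).eq⟩

lemma hasDerivAt_clm_along {E F : Type*} [NormedAddCommGroup E] [NormedSpace ℝ E]
    [NormedAddCommGroup F] [NormedSpace ℝ F] {D : E → E →L[ℝ] F} {D' : E →L[ℝ] E →L[ℝ] F}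
    {y d : E} {γ : ℝ → E} {t : ℝ} (h : HasFDerivAt D D' y) (hγ : HasDerivAt γ d t)
    (hy : y = γ t) (v : E) : HasDerivAt (fun r => D (γ r) v) (D' d v) t :=
  (ContinuousLinearMap.apply ℝ F v).hasFDerivAt.comp_hasDerivAt t
    (h.comp_hasDerivAt_of_eq t hγ hy)

/-- Second order condition in the direction `d` at a local maximum of `η W`, where
`η = exp (K ψ) - 1`. With `e` the direction of `∇φ x`, the function `η √(1 + (∂_e φ)²)` lies below
`η W` near `x` and agrees with it at `x`, so it has a local maximum too. -/
lemma second_order_at_max {n : ℕ} {φ : EuclideanSpace ℝ (Fin n) → ℝ}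
    (hφ : ContDiffOn ℝ (⊤ : ℕ∞) φ (ball 0 1)) {c K m : ℝ} (hK : 0 < K)
    {ψ : EuclideanSpace ℝ (Fin n) → ℝ} (hψ : ψ = fun y => c * φ y + m - ‖y‖ ^ 2)
    {x : EuclideanSpace ℝ (Fin n)} (hx : x ∈ ball (0 : EuclideanSpace ℝ (Fin n)) 1)
    (hpos : 0 < ψ x)
    (hmax : IsLocalMax (fun y => (Real.exp (K * ψ y) - 1) * √(1 + ‖gradient φ y‖ ^ 2)) x)
    {e : EuclideanSpace ℝ (Fin n)} (he1 : ‖e‖ = 1) (hwx : fderiv ℝ φ x e = ‖gradient φ x‖)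
    (d : EuclideanSpace ℝ (Fin n)) :
    K * Real.exp (K * ψ x) * (c * fderiv ℝ (fderiv ℝ φ) x d d - 2 * ⟪d, d⟫
        + K * (c * fderiv ℝ φ x d - 2 * ⟪x, d⟫) ^ 2) / (Real.exp (K * ψ x) - 1)
      + ‖gradient φ x‖ * fderiv ℝ (fderiv ℝ (fderiv ℝ φ)) x e d d / (1 + ‖gradient φ x‖ ^ 2)
      + (1 - 2 * ‖gradient φ x‖ ^ 2) / (1 + ‖gradient φ x‖ ^ 2) ^ 2
        * fderiv ℝ (fderiv ℝ φ) x e d ^ 2 ≤ 0 := by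
  obtain ⟨-, d1x, d2x, -, sym3⟩ := smooth_facts hφ hx
  have hline : ∀ t : ℝ, HasDerivAt (fun t : ℝ => x + t • d) d t := fun t => by
    simpa using ((hasDerivAt_id t).smul_const d).const_add x
  have hx0 : x + (0 : ℝ) • d = x := by simp
  have hcont : Tendsto (fun t : ℝ => x + t • d) (𝓝 0) (𝓝 x) := by
    simpa using (hline 0).continuousAt.tendsto
  have hball : ∀ᶠ t in 𝓝 (0 : ℝ), x + t • d ∈ ball (0 : EuclideanSpace ℝ (Fin n)) 1 :=
    hcont.eventually (isOpen_ball.mem_nhds hx)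
  have hψ1 : ∀ t : ℝ, x + t • d ∈ ball (0 : EuclideanSpace ℝ (Fin n)) 1 →
      HasDerivAt (fun t : ℝ => ψ (x + t • d))
        (c * fderiv ℝ φ (x + t • d) d - 2 * ⟪x + t • d, d⟫) t := fun t ht => by
    rw [hψ]
    have hφt := (smooth_facts hφ ht).1.hasFDerivAt.comp_hasDerivAt t (hline t)
    exact ((hφt.const_mul c).add_const m).sub (hline t).norm_sq
  have hψ2 : HasDerivAt (fun t : ℝ => c * fderiv ℝ φ (x + t • d) d - 2 * ⟪x + t • d, d⟫)
      (c * fderiv ℝ (fderiv ℝ φ) x d d - 2 * ⟪d, d⟫) 0 := by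
    have h1 := (hasDerivAt_clm_along d1x.hasFDerivAt (hline 0) hx0.symm d).const_mul c
    have h2 := ((hline 0).inner ℝ (hasDerivAt_const (0 : ℝ) d)).const_mul 2
    refine (h1.sub h2).congr_deriv ?_
    simp
  -- By symmetry of the Hessian the derivative of `∂_e φ` along the line is written with `e` first, so
  -- that differentiating once more gives `D³φ d e d = D³φ e d d`.
  have hw1 : ∀ᶠ t in 𝓝 (0 : ℝ), HasDerivAt (fun t : ℝ => fderiv ℝ φ (x + t • d) e)
      (fderiv ℝ (fderiv ℝ φ) (x + t • d) e d) t := by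
    filter_upwards [hball] with t ht
    obtain ⟨-, d1t, -, sym2t, -⟩ := smooth_facts hφ ht
    rw [sym2t e d]
    exact hasDerivAt_clm_along d1t.hasFDerivAt (hline t) rfl e
  have hw2 : HasDerivAt (fun t : ℝ => fderiv ℝ (fderiv ℝ φ) (x + t • d) e d)
      (fderiv ℝ (fderiv ℝ (fderiv ℝ φ)) x e d d) 0 := by
    have h1 := hasDerivAt_clm_along d2x.hasFDerivAt (hline 0) hx0.symm e
    rw [sym3 e d]
    exact (ContinuousLinearMap.apply ℝ ℝ d).hasFDerivAt.comp_hasDerivAt 0 h1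
  have hf1 : ∀ᶠ t in 𝓝 (0 : ℝ), HasDerivAt (fun t : ℝ => Real.exp (K * ψ (x + t • d)) - 1)
      (Real.exp (K * ψ (x + t • d))
        * (K * (c * fderiv ℝ φ (x + t • d) d - 2 * ⟪x + t • d, d⟫))) t := by
    filter_upwards [hball] with t ht
    exact (((hψ1 t ht).const_mul K).exp).sub_const 1
  have hf2 := (((hψ1 0 (by rwa [hx0])).const_mul K).exp).mul (hψ2.const_mul K)
  have hpos0 : 0 < Real.exp (K * ψ (x + (0 : ℝ) • d)) - 1 := by
    rw [hx0]
    exact sub_pos.2 (Real.one_lt_exp_iff.2 (mul_pos hK hpos))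
  have hloc : IsLocalMax (fun t : ℝ => (Real.exp (K * ψ (x + t • d)) - 1)
      * √(1 + (fderiv ℝ φ (x + t • d) e) ^ 2)) 0 := by
    have hfpos := hf1.self_of_nhds.continuousAt.eventually (lt_mem_nhds hpos0)
    filter_upwards [hcont.eventually hmax, hfpos] with t ht hft
    have hle : (fderiv ℝ φ (x + t • d) e) ^ 2 ≤ ‖gradient φ (x + t • d)‖ ^ 2 := by
      have := abs_real_inner_le_norm (gradient φ (x + t • d)) e
      rw [he1, mul_one, gradient, InnerProductSpace.toDual_symm_apply] at this
      rw [← sq_abs]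
      gcongr
      exact this
    calc _ ≤ (Real.exp (K * ψ (x + t • d)) - 1) * √(1 + ‖gradient φ (x + t • d)‖ ^ 2) := by
          gcongr
      _ ≤ _ := ht
      _ = _ := by rw [hx0, hwx]
  have key := weighted_max_second_order hf1 hf2 hw1 hw2 hpos0 hloc
  simp only [hx0, hwx] at key
  refine le_trans (le_of_eq ?_) key
  ring

/-- The gradient of `φ` is a priori bounded at any interior maximum of `η W` at which `η > 0`. -/
lemma slope_bound_at_max {n : ℕ} {φ : EuclideanSpace ℝ (Fin n) → ℝ}
    (hφ : ContDiffOn ℝ (⊤ : ℕ∞) φ (ball 0 1))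
    (hdiv : ∀ x ∈ ball (0 : EuclideanSpace ℝ (Fin n)) 1,
      ∑ i : Fin n, fderiv ℝ (fun y => (√(1 + ‖gradient φ y‖ ^ 2))⁻¹ • gradient φ y) x
        (EuclideanSpace.single i 1) i = 0)
    {c K m : ℝ} (hc : 0 < c) (hK : 0 < K) (hKc : 2 * n < K * (c ^ 2 / 8))
    {ψ : EuclideanSpace ℝ (Fin n) → ℝ} (hψ : ψ = fun y => c * φ y + m - ‖y‖ ^ 2)
    {x : EuclideanSpace ℝ (Fin n)} (hx : x ∈ ball (0 : EuclideanSpace ℝ (Fin n)) 1)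
    (hpos : 0 < ψ x)
    (hmax : IsLocalMax (fun y => (Real.exp (K * ψ y) - 1) * √(1 + ‖gradient φ y‖ ^ 2)) x) :
    ‖gradient φ x‖ ≤ max 1 (4 / c) := by
  by_contra hlt
  push Not at hlt
  rw [max_lt_iff] at hlt
  set b := EuclideanSpace.basisFun (Fin n) ℝ with hb
  have d1 : ∀ y ∈ ball (0 : EuclideanSpace ℝ (Fin n)) 1, DifferentiableAt ℝ (fderiv ℝ φ) y :=
    fun y hy => (smooth_facts hφ hy).2.1
  obtain ⟨-, -, d2x, sym2x, -⟩ := smooth_facts hφ hx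
  have hgi : ∀ y d, ⟪gradient φ y, d⟫ = fderiv ℝ φ y d := fun y d =>
    InnerProductSpace.toDual_symm_apply
  obtain ⟨L, hL, hLi⟩ := hasFDerivAt_gradient (d1 x hx)
  have hPDE : ∀ y ∈ ball (0 : EuclideanSpace ℝ (Fin n)) 1, _ := fun y hy =>
    minimal_nondivergence (d1 y hy) (hdiv y hy)
  have hlin := fun e => minimal_linearized b d2x hL
    (by filter_upwards [isOpen_ball.mem_nhds hx] with y hy using hPDE y hy) e
  have hPx := hPDE x hx
  set p := gradient φ x with hp
  set s := ‖p‖ with hs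
  have hs0 : 0 < s := by linarith [hlt.1]
  set e : EuclideanSpace ℝ (Fin n) := s⁻¹ • p with he
  have hpe : p = s • e := by rw [he, smul_inv_smul₀ hs0.ne']
  have he1 : ‖e‖ = 1 := by
    rw [he, norm_smul, norm_inv, norm_norm, inv_mul_cancel₀ hs0.ne']
  set A := fderiv ℝ (fderiv ℝ φ) x with hA
  set T := fderiv ℝ (fderiv ℝ (fderiv ℝ φ)) x e with hT
  have hpin : ⟪p, e⟫ = s := by
    rw [hpe, real_inner_smul_left, real_inner_self_eq_norm_sq, he1]; ring
  have hcs : 4 ≤ c * s := by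
    have := hlt.2
    rw [div_lt_iff₀ hc] at this
    linarith
  have hx1 : ‖x‖ ≤ 1 := (mem_ball_zero_iff.1 hx).le
  refine no_large_slope b x e (L e) s c K (Real.exp (K * ψ x)) (Real.exp (K * ψ x) - 1) A T he1
    hlt.1.le hcs hx1 hK (Real.exp_pos _)
    (sub_pos.2 (Real.one_lt_exp_iff.2 (mul_pos hK hpos))) hc hKc
    (fun d => by rw [hLi, sym2x]) ?_ ?_ ?_
  · rw [hPx, hpe]
    simp only [map_smul, smul_apply, smul_eq_mul]
    ring
  · have h := hlin e
    have h1 : ⟪p, L e⟫ = s * A e e := by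
      rw [real_inner_comm, hLi, hpe, map_smul, smul_eq_mul]
    have h2 : A p (L e) = s * ‖L e‖ ^ 2 := by
      rw [hpe, map_smul, smul_apply, ← hLi, real_inner_self_eq_norm_sq, smul_eq_mul]
    have h3 : T p p = s ^ 2 * T e e := by
      rw [hpe]
      simp only [map_smul, smul_apply, smul_eq_mul]
      ring
    rw [sym2x (L e) p, h1, h2, h3] at h
    linarith
  · intro d
    have hwx : fderiv ℝ φ x e = s := by rw [← hgi, ← hp, hpin]
    have hdx : fderiv ℝ φ x d = s * ⟪e, d⟫ := by
      rw [← hgi, ← hp, hpe, real_inner_smul_left]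
    have key := second_order_at_max hφ hK hψ hx hpos hmax he1 hwx d
    rw [hdx] at key
    rwa [hLi]

/-! ### The interior gradient bound -/

/-- **Bombieri–De Giorgi–Miranda gradient bound.**  For every dimension `n ≥ 2` and every
`M > 0` there is a constant `C = C(n, M)` such that any smooth solution `φ` of the minimal
surface equation `div (∇φ / √(1 + |∇φ|²)) = 0` on the unit ball with `|φ| ≤ M` satisfies
`|∇φ| ≤ C` on the ball of radius `1/2`. -/
theorem gradient_bound_minimal_surface :
    ∀ n : ℕ, 2 ≤ n → ∀ M : ℝ, 0 < M → ∃ C : ℝ,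
      ∀ φ : EuclideanSpace ℝ (Fin n) → ℝ,
        ContDiffOn ℝ (⊤ : ℕ∞) φ (Metric.ball 0 1) →
        (∀ x ∈ Metric.ball (0 : EuclideanSpace ℝ (Fin n)) 1,
          ediv n (fun y => (Real.sqrt (1 + ‖gradient φ y‖ ^ 2))⁻¹ • gradient φ y) x = 0) →
        (∀ x ∈ Metric.ball (0 : EuclideanSpace ℝ (Fin n)) 1, |φ x| ≤ M) →
        ∀ x ∈ Metric.ball (0 : EuclideanSpace ℝ (Fin n)) (1 / 2), ‖gradient φ x‖ ≤ C := by
  intro n _ M hM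
  set c : ℝ := 1 / (4 * M) with hc
  set K : ℝ := 16 * (n + 1) / c ^ 2 with hKdef
  set S : ℝ := max 1 (4 / c) with hS
  have hc0 : 0 < c := by positivity
  have hcM : c * M = 1 / 4 := by rw [hc]; field_simp
  have hK : 0 < K := by positivity
  have hKc : 2 * n < K * (c ^ 2 / 8) := by
    have : K * (c ^ 2 / 8) = 2 * (n + 1) := by rw [hKdef]; field_simp; norm_num
    linarith
  refine ⟨Real.exp K * √(1 + S ^ 2) / (Real.exp (K * (3 / 50)) - 1),
    fun φ hφ hdiv hbd x hx => ?_⟩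
  -- `c * M = 1 / 4`, so this constant makes `ψ = c (φ - M) + (9/10)² - |x|²`.
  set m : ℝ := 81 / 100 - 1 / 4 with hm
  set ψ : EuclideanSpace ℝ (Fin n) → ℝ := fun y => c * φ y + m - ‖y‖ ^ 2 with hψ
  set Φ : EuclideanSpace ℝ (Fin n) → ℝ :=
    fun y => (Real.exp (K * ψ y) - 1) * √(1 + ‖gradient φ y‖ ^ 2) with hΦ
  have hcφ : ∀ y ∈ ball (0 : EuclideanSpace ℝ (Fin n)) 1, |c * φ y| ≤ 1 / 4 := fun y hy => by
    rw [abs_mul, abs_of_pos hc0, ← hcM]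
    gcongr
    exact hbd y hy
  have hsub : closedBall (0 : EuclideanSpace ℝ (Fin n)) (9 / 10) ⊆ ball 0 1 :=
    closedBall_subset_ball (by norm_num)
  have hgrad : ContinuousOn (gradient φ) (ball 0 1) := fun y hy => by
    have hD1 : ContDiffOn ℝ (⊤ : ℕ∞) (fderiv ℝ φ) (ball 0 1) :=
      hφ.fderiv_of_isOpen isOpen_ball (by simp)
    obtain ⟨L, hL, -⟩ := hasFDerivAt_gradient
      ((hD1.contDiffAt (isOpen_ball.mem_nhds hy)).differentiableAt (by simp))
    exact hL.continuousAt.continuousWithinAt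
  have hφc : ContinuousOn φ (ball 0 1) := hφ.continuousOn
  have hΦc : ContinuousOn Φ (closedBall 0 (9 / 10)) := by
    refine ContinuousOn.mono ?_ hsub
    rw [hΦ, hψ]
    fun_prop
  have hne : (closedBall (0 : EuclideanSpace ℝ (Fin n)) (9 / 10)).Nonempty :=
    nonempty_closedBall.2 (by norm_num)
  obtain ⟨x₀, hx₀, hx₀max⟩ := (isCompact_closedBall _ _).exists_isMaxOn hne hΦc
  have hxn : ‖x‖ < 1 / 2 := mem_ball_zero_iff.1 hx
  have hxc : x ∈ closedBall (0 : EuclideanSpace ℝ (Fin n)) (9 / 10) := by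
    rw [mem_closedBall_zero_iff]; linarith
  have hψx : 3 / 50 ≤ ψ x := by
    have h1 := neg_le_of_abs_le (hcφ x (hsub hxc))
    have h2 : ‖x‖ ^ 2 ≤ (1 / 2) ^ 2 := by gcongr
    simp only [hψ, hm]
    linarith
  have hη : 0 < Real.exp (K * (3 / 50)) - 1 :=
    sub_pos.2 (Real.one_lt_exp_iff.2 (by positivity))
  have hηx : Real.exp (K * (3 / 50)) - 1 ≤ Real.exp (K * ψ x) - 1 := by gcongr
  have hle : Φ x ≤ Φ x₀ := hx₀max hxc
  have hΦx : (Real.exp (K * (3 / 50)) - 1) * ‖gradient φ x‖ ≤ Φ x := by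
    have : ‖gradient φ x‖ ≤ √(1 + ‖gradient φ x‖ ^ 2) :=
      Real.le_sqrt_of_sq_le (by linarith)
    simp only [hΦ]
    have := hη.le.trans hηx
    gcongr
  have hΦpos : 0 < Φ x₀ := by
    refine lt_of_lt_of_le (mul_pos (lt_of_lt_of_le hη hηx) (Real.sqrt_pos.2 (by positivity))) hle
  have hη₀ : 0 < Real.exp (K * ψ x₀) - 1 := pos_of_mul_pos_left hΦpos (Real.sqrt_nonneg _)
  have hψ₀ : 0 < ψ x₀ := by
    have := Real.one_lt_exp_iff.1 (sub_pos.1 hη₀)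
    exact pos_of_mul_pos_right this hK.le
  have hup := le_of_abs_le (hcφ x₀ (hsub hx₀))
  have hx₀n : ‖x₀‖ < 9 / 10 := by
    refine lt_of_pow_lt_pow_left₀ 2 (by norm_num) ?_
    simp only [hψ, hm] at hψ₀
    norm_num
    linarith
  have hloc : IsLocalMax Φ x₀ :=
    hx₀max.isLocalMax (mem_of_superset (isOpen_ball.mem_nhds (mem_ball_zero_iff.2 hx₀n))
      ball_subset_closedBall)
  have hslope := slope_bound_at_max hφ hdiv hc0 hK hKc hψ (hsub hx₀) hψ₀ hloc
  have hψ₀' : ψ x₀ ≤ 1 := by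
    simp only [hψ, hm]
    linarith [sq_nonneg ‖x₀‖]
  have hΦ₀ : Φ x₀ ≤ Real.exp K * √(1 + S ^ 2) := by
    have h1 : Real.exp (K * ψ x₀) - 1 ≤ Real.exp K := by
      have : Real.exp (K * ψ x₀) ≤ Real.exp K := Real.exp_le_exp.2 (by nlinarith)
      linarith
    simp only [hΦ]
    gcongr
  rw [le_div_iff₀ hη, mul_comm]
  linarith
end

section
/- Let U ⊂ ℝⁿ be a bounded open set, let f : ℝ → ℝ, let u be a smooth function on the closure of U, and let (v_t)_{0 ≤ t ≤ 1} be a family of smooth functions on the closure of U depending continuously on t (i.e., (t,x) ↦ v_t(x) is continuous on [0,1] × closure(U)). Assume Δu = f(u) on U, Δv_t > f(v_t) on U for every t ∈ [0,1], v_0 < u on the closure of U, and v_t < u on ∂U for all t ∈ [0,1]. Then v_t < u on U for all t ∈ [0,1]. -/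
/-!
The argument is by first contact. The set of pairs `(t, x) ∈ [0,1] × closure U` with `u x ≤ v t x`
is compact; if it is nonempty, it contains a pair `(t₀, x₀)` with `t₀` minimal. Then `t₀ > 0` by
the hypothesis at time `0`, and `x₀ ∈ U` by the hypothesis on the frontier. Minimality and
continuity in `t` give `v t₀ ≤ u` on `closure U`, with equality at `x₀`, so `u - v t₀` has a local
minimum at `x₀`. Hence `Δ(v t₀) x₀ ≤ Δu x₀` (`elap_le_of_isLocalMin_sub`), whereas the
differential relations give `Δu x₀ = f (u x₀) = f (v t₀ x₀) < Δ(v t₀) x₀`.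
-/

open MeasureTheory Metric Set Filter

/-- Laplacian of `f : ℝⁿ → ℝ` computed via iterated directional derivatives. -/
noncomputable def elap (n : ℕ) (f : EuclideanSpace ℝ (Fin n) → ℝ)
    (x : EuclideanSpace ℝ (Fin n)) : ℝ :=
  ∑ i : Fin n,
    fderiv ℝ (fun y => fderiv ℝ f y (EuclideanSpace.single i 1)) x (EuclideanSpace.single i 1)

/-- Necessary second-order condition at a local minimum. No differentiability is needed: if
`deriv (deriv g) a` were negative, the second derivative test would make `a` a local maximum as
well, so `g` would be locally constant and the second derivative zero. -/
lemma deriv_deriv_nonneg_of_isLocalMin {g : ℝ → ℝ} {a : ℝ} (hmin : IsLocalMin g a)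
    (hc : ContinuousAt g a) : 0 ≤ deriv (deriv g) a := by
  by_contra! hneg
  have hmax : IsLocalMax g a := isLocalMax_of_deriv_deriv_neg hneg hmin.deriv_eq_zero hc
  have hconst : g =ᶠ[nhds a] fun _ => g a := by
    filter_upwards [hmin, hmax] with s h1 h2
    exact le_antisymm h2 h1
  have hzero : deriv (deriv g) a = 0 := by
    rw [hconst.deriv.deriv_eq]
    simp
  exact hneg.ne hzero

/-- Second derivatives along a line, at a local minimum of the difference of two functions. -/
lemma fderiv_fderiv_le_of_isLocalMin_sub {E : Type*} [NormedAddCommGroup E] [NormedSpace ℝ E]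
    {u w : E → ℝ} {x : E} (hu : ContDiffAt ℝ 2 u x) (hw : ContDiffAt ℝ 2 w x)
    (hmin : IsLocalMin (fun y => u y - w y) x) (e : E) :
    fderiv ℝ (fun y => fderiv ℝ w y e) x e ≤ fderiv ℝ (fun y => fderiv ℝ u y e) x e := by
  have hline : ∀ s : ℝ, HasDerivAt (fun s : ℝ => x + s • e) e s := fun s => by
    simpa using ((hasDerivAt_id s).smul_const e).const_add x
  have htend : Tendsto (fun s : ℝ => x + s • e) (nhds 0) (nhds x) := by
    simpa using (hline 0).continuousAt.tendsto
  have hfirst : ∀ {h : E → ℝ}, ContDiffAt ℝ 2 h x → ∀ᶠ s : ℝ in nhds 0,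
      HasDerivAt (fun s : ℝ => h (x + s • e)) (fderiv ℝ h (x + s • e) e) s := fun {h} hh => by
    filter_upwards [htend.eventually (hh.eventually (by simp))] with s hs
    exact (hs.differentiableAt (by simp)).hasFDerivAt.comp_hasDerivAt s (hline s)
  have hsecond : ∀ {h : E → ℝ}, ContDiffAt ℝ 2 h x →
      HasDerivAt (fun s : ℝ => fderiv ℝ h (x + s • e) e)
        (fderiv ℝ (fun y => fderiv ℝ h y e) x e) 0 := fun {h} hh => by
    have hd : DifferentiableAt ℝ (fun y => fderiv ℝ h y e) x :=
      ((hh.fderiv_right (m := 1) (by norm_num)).differentiableAt (by simp)).clm_apply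
        (differentiableAt_const e)
    have hd' : HasFDerivAt (fun y => fderiv ℝ h y e)
        (fderiv ℝ (fun y => fderiv ℝ h y e) x) (x + (0 : ℝ) • e) := by
      simpa using hd.hasFDerivAt
    exact hd'.comp_hasDerivAt 0 (hline 0)
  have hderiv : deriv (fun s : ℝ => u (x + s • e) - w (x + s • e)) =ᶠ[nhds 0]
      fun s => fderiv ℝ u (x + s • e) e - fderiv ℝ w (x + s • e) e := by
    filter_upwards [hfirst hu, hfirst hw] with s h1 h2
    exact (h1.sub h2).deriv
  have hmin' : IsLocalMin (fun s : ℝ => u (x + s • e) - w (x + s • e)) 0 := by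
    filter_upwards [htend.eventually hmin] with s hs
    simpa using hs
  have hcont : ContinuousAt (fun s : ℝ => u (x + s • e) - w (x + s • e)) 0 :=
    ((hfirst hu).self_of_nhds.sub (hfirst hw).self_of_nhds).continuousAt
  have hnonneg := deriv_deriv_nonneg_of_isLocalMin hmin' hcont
  rw [hderiv.deriv_eq, ((hsecond hu).fun_sub (hsecond hw)).deriv] at hnonneg
  linarith

lemma elap_le_of_isLocalMin_sub {n : ℕ} {u w : EuclideanSpace ℝ (Fin n) → ℝ}
    {x : EuclideanSpace ℝ (Fin n)} (hu : ContDiffAt ℝ 2 u x) (hw : ContDiffAt ℝ 2 w x)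
    (hmin : IsLocalMin (fun y => u y - w y) x) : elap n w x ≤ elap n u x :=
  Finset.sum_le_sum fun _ _ => fderiv_fderiv_le_of_isLocalMin_sub hu hw hmin _

/-- **Deformation maximum principle.**  If `Δu = f(u)` on a bounded open set `U`,
`Δv_t > f(v_t)` on `U` for a continuous family of smooth functions `v_t`, `v_0 < u` on the
closure of `U`, and `v_t < u` on `∂U` for all `t ∈ [0,1]`, then `v_t < u` on `U` for all
`t ∈ [0,1]`. -/
theorem deformation_maximum_principle (n : ℕ) (U : Set (EuclideanSpace ℝ (Fin n)))
    (hUopen : IsOpen U) (hUbdd : Bornology.IsBounded U) (f : ℝ → ℝ)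
    (u : EuclideanSpace ℝ (Fin n) → ℝ) (v : ℝ → EuclideanSpace ℝ (Fin n) → ℝ)
    (hu : ContDiffOn ℝ (⊤ : ℕ∞) u (closure U))
    (hv : ∀ t ∈ Set.Icc (0 : ℝ) 1, ContDiffOn ℝ (⊤ : ℕ∞) (v t) (closure U))
    (hvcont : ContinuousOn (fun p : ℝ × EuclideanSpace ℝ (Fin n) => v p.1 p.2)
      (Set.Icc (0 : ℝ) 1 ×ˢ closure U))
    (hueq : ∀ x ∈ U, elap n u x = f (u x))
    (hvsub : ∀ t ∈ Set.Icc (0 : ℝ) 1, ∀ x ∈ U, f (v t x) < elap n (v t) x)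
    (hv0 : ∀ x ∈ closure U, v 0 x < u x)
    (hbdry : ∀ t ∈ Set.Icc (0 : ℝ) 1, ∀ x ∈ frontier U, v t x < u x) :
    ∀ t ∈ Set.Icc (0 : ℝ) 1, ∀ x ∈ U, v t x < u x := by
  by_contra! hcon
  obtain ⟨t₁, ht₁, x₁, hx₁, hle₁⟩ := hcon
  set C : Set (ℝ × EuclideanSpace ℝ (Fin n)) := Set.Icc (0 : ℝ) 1 ×ˢ closure U with hC
  have hCcomp : IsCompact C := isCompact_Icc.prod hUbdd.isCompact_closure
  have hucont : ContinuousOn (fun p : ℝ × EuclideanSpace ℝ (Fin n) => u p.2) C :=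
    hu.continuousOn.comp continuousOn_snd fun p hp => hp.2
  have hKcomp : IsCompact {p ∈ C | u p.2 ≤ v p.1 p.2} :=
    hCcomp.of_isClosed_subset (hCcomp.isClosed.isClosed_le hucont hvcont) (Set.sep_subset _ _)
  -- The first contact: a pair with minimal time.
  obtain ⟨⟨t, x⟩, ⟨⟨ht, hx⟩, hle⟩, hfirst⟩ :=
    hKcomp.exists_isMinOn ⟨(t₁, x₁), ⟨ht₁, subset_closure hx₁⟩, hle₁⟩ continuousOn_fst
  simp only at ht hx hle
  have hbefore : ∀ s ∈ Set.Ico 0 t, ∀ y ∈ closure U, v s y < u y := by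
    intro s hs y hy
    by_contra! hcontact
    have hts : t ≤ s := hfirst (a := (s, y)) ⟨⟨⟨hs.1, hs.2.le.trans ht.2⟩, hy⟩, hcontact⟩
    exact absurd hs.2 hts.not_gt
  have hxU : x ∈ U := by
    by_contra hxU
    exact (hbdry t ht x ⟨hx, by rwa [hUopen.interior_eq]⟩).not_ge hle
  have htpos : 0 < t := by
    refine lt_of_le_of_ne ht.1 fun h0 => ?_
    rw [← h0] at hle
    exact (hv0 x hx).not_ge hle
  have hbelow : ∀ y ∈ closure U, v t y ≤ u y := by
    intro y hy
    have hvt : ContinuousOn (fun s => v s y) (Set.Icc 0 1) :=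
      hvcont.comp (f := fun s => (s, y)) (by fun_prop) fun s hs => ⟨hs, hy⟩
    have hlim : Tendsto (fun s => v s y) (nhdsWithin t (Set.Ico 0 t)) (nhds (v t y)) :=
      (hvt t ht).mono fun s hs => ⟨hs.1, hs.2.le.trans ht.2⟩
    have hne : (nhdsWithin t (Set.Ico 0 t)).NeBot := by
      rw [← mem_closure_iff_nhdsWithin_neBot, closure_Ico htpos.ne]
      exact Set.right_mem_Icc.2 ht.1
    refine le_of_tendsto hlim ?_
    filter_upwards [self_mem_nhdsWithin] with s hs
    exact (hbefore s hs y hy).le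
  have heq : u x = v t x := le_antisymm hle (hbelow x hx)
  have hnhds : closure U ∈ nhds x := mem_of_superset (hUopen.mem_nhds hxU) subset_closure
  have hmin : IsLocalMin (fun y => u y - v t y) x := by
    filter_upwards [hnhds] with y hy
    linarith [hbelow y hy]
  have htwo : (2 : WithTop ℕ∞) ≤ ((⊤ : ℕ∞) : WithTop ℕ∞) :=
    WithTop.coe_le_coe.2 (le_top : (2 : ℕ∞) ≤ ⊤)
  have hlap := elap_le_of_isLocalMin_sub ((hu.contDiffAt hnhds).of_le htwo)
    (((hv t ht).contDiffAt hnhds).of_le htwo) hmin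
  have hsub := hvsub t ht x hxU
  rw [hueq x hxU, heq] at hlap
  linarith
end

section
/- Let w : ℝ → (0,∞) be a log-concave probability density (i.e., w = e^{−h} with h : ℝ → ℝ convex and ∫_ℝ w(s) ds = 1) that is even: w(−s) = w(s) for all s. Then for every t ≥ 0, ∫_t^∞ w(s) ds ≤ (1/2) e^{−2 w(0) t}. -/
/-!
On `[0, ∞)` compare `w` with the exponential density `g s = w 0 * exp (-2 * w 0 * s)`. Both have
mass `1/2` there, by evenness of `w`, and `g` has tail `(1/2) * exp (-2 * w 0 * t)`. As `h` is
convex and `-log g` is affine with the same value at `0`, the set `{s ≥ 0 | g s ≤ w s}` is an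
initial segment of `[0, ∞)` (`convex_le_affine_of_le`). If `t` lies outside it, then `w ≤ g` on
`[t, ∞)` and integrating gives the bound. If `t` lies in it, then `g ≤ w` on `[0, t]`, and the
bound follows by subtracting from the common mass `1/2`.
-/

open MeasureTheory Set

/-- The set of `s ≥ 0` on which a convex function lies below an affine one agreeing with it
at `0` is an initial segment. -/
lemma convex_le_affine_of_le {h : ℝ → ℝ} (hconv : ConvexOn ℝ Set.univ h) (k : ℝ) {s u : ℝ}
    (hs : 0 ≤ s) (hsu : s ≤ u) (hu : h u ≤ h 0 + k * u) : h s ≤ h 0 + k * s := by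
  rcases eq_or_lt_of_le (hs.trans hsu) with h0 | h0
  · have : s = 0 := by linarith
    simp [this]
  · have h1 : s / u ≤ 1 := (div_le_one h0).2 hsu
    have h2 : 0 ≤ s / u := by positivity
    have h3 := hconv.2 (mem_univ u) (mem_univ 0) h2 (sub_nonneg.2 h1) (by ring)
    have h4 : s / u * u = s := by field_simp
    simp only [smul_eq_mul, mul_zero, add_zero, h4] at h3
    calc h s ≤ s / u * h u + (1 - s / u) * h 0 := h3
      _ ≤ s / u * (h 0 + k * u) + (1 - s / u) * h 0 := by gcongr
      _ = h 0 + k * (s / u * u) := by ring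
      _ = h 0 + k * s := by rw [h4]

/-- **Tail bound for even log-concave densities on `ℝ`.**  If `w = e^{-h}` is an even
log-concave probability density on `ℝ`, then for every `t ≥ 0`,
`∫_t^∞ w(s) ds ≤ (1/2) e^{-2 w(0) t}`. -/
theorem logconcave_even_tail_bound (w h : ℝ → ℝ)
    (hwh : ∀ s, w s = Real.exp (-h s))
    (hconv : ConvexOn ℝ Set.univ h)
    (hint : ∫ s, w s = 1)
    (heven : ∀ s, w (-s) = w s) :
    ∀ t : ℝ, 0 ≤ t →
      ∫ s in Set.Ioi t, w s ≤ (1 / 2) * Real.exp (-2 * w 0 * t) := by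
  intro t ht
  -- A non-integrable function would have Bochner integral `0`.
  have hwi : Integrable w := by
    by_contra hn
    rw [integral_undef hn] at hint
    exact zero_ne_one hint
  have hc : 0 < w 0 := by rw [hwh]; positivity
  have hc2 : -2 * w 0 < 0 := by linarith
  have hg : ∀ s, w 0 * Real.exp (-2 * w 0 * s) = Real.exp (-(h 0 + 2 * w 0 * s)) := by
    intro s
    rw [neg_add, Real.exp_add, ← hwh 0]
    ring_nf
  have hgi : ∀ a, IntegrableOn (fun s => w 0 * Real.exp (-2 * w 0 * s)) (Ioi a) := fun a =>
    (integrableOn_exp_mul_Ioi hc2 a).const_mul _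
  have hgt : ∀ a, ∫ s in Ioi a, w 0 * Real.exp (-2 * w 0 * s)
      = (1 / 2) * Real.exp (-2 * w 0 * a) := by
    intro a
    rw [integral_const_mul, integral_exp_mul_Ioi hc2]
    field_simp
  have hhalf : ∫ s in Ioi 0, w s = 1 / 2 := by
    have h1 : ∫ s in Iic (0 : ℝ), w s = ∫ s in Ioi 0, w s := by
      have := integral_comp_neg_Iic (0 : ℝ) w
      simpa [heven] using this
    have h2 := intervalIntegral.integral_Iic_add_Ioi
      (hwi.integrableOn (s := Iic 0)) (hwi.integrableOn (s := Ioi 0))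
    rw [hint, h1] at h2
    linarith
  by_cases hcase : h t ≤ h 0 + 2 * w 0 * t
  · have hsplit : ∀ f : ℝ → ℝ, IntegrableOn f (Ioi 0) →
        ∫ s in Ioi 0, f s = (∫ s in Ioc 0 t, f s) + ∫ s in Ioi t, f s := by
      intro f hf
      rw [← Ioc_union_Ioi_eq_Ioi ht]
      exact setIntegral_union (Ioc_disjoint_Ioi le_rfl) measurableSet_Ioi
        (hf.mono_set Ioc_subset_Ioi_self) (hf.mono_set (Ioi_subset_Ioi ht))
    have h1 := hsplit w hwi.integrableOn
    have h2 := hsplit _ (hgi 0)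
    have h3 : ∫ s in Ioc 0 t, w 0 * Real.exp (-2 * w 0 * s) ≤ ∫ s in Ioc 0 t, w s := by
      refine setIntegral_mono_on ((hgi 0).mono_set Ioc_subset_Ioi_self) hwi.integrableOn
        measurableSet_Ioc fun s hs => ?_
      rw [hg, hwh s, Real.exp_le_exp]
      exact neg_le_neg (convex_le_affine_of_le hconv _ hs.1.le hs.2 hcase)
    rw [hgt, hgt, mul_zero, Real.exp_zero] at h2
    linarith
  · rw [← hgt t]
    refine setIntegral_mono_on hwi.integrableOn (hgi t) measurableSet_Ioi fun s hs => ?_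
    rw [hg, hwh s, Real.exp_le_exp]
    by_contra hn
    exact hcase (convex_le_affine_of_le hconv _ ht (mem_Ioi.1 hs).le (by linarith))
end

section
/- Let Ω ⊂ ℝⁿ be a bounded open connected set and let 0 < α < 1. If E ⊂ Ω is an open isoperimetric set in Ω with volume fraction α (that is, |E| = α|Ω| and P(E,Ω) ≤ P(F,Ω) for every Borel set F ⊂ Ω with |F| = α|Ω|), then E is not relatively compact in Ω; that is, the closure of E is not contained in Ω (equivalently, the closure of E meets ∂Ω). -/
/-!
The proof compares `E` with the traces on `Ω` of its dilated translates `x + l • E`.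

Suppose `closure E ⊆ Ω`.  Then the relative perimeter `p` of `E` is also its perimeter in the whole
space, so `A = x + l • E` has perimeter `l ^ (n - 1) * p`.  Here `p` is finite, since a ball
intersected with `Ω` is a competitor of finite perimeter (`exists_finite_relPerimeter`).  Whenever
`|A ∩ Ω| = |E|`, the set `A ∩ Ω` is a competitor, so at least `p` of the perimeter of `A` lies
inside `Ω`.  Hence the volume of the part of the `ε`-neighbourhood of `A` outside `Ω` grows at rate
at most `(l ^ (n - 1) - 1) * p = O(l - 1)` (`frequently_outer_growth_le`).  Since a small dilation
and translation of `A` stays in such a neighbourhood, this bounds the volume that escapes from `Ω`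
when `l` and `x` vary.

Along the path `l = 1 + δ * t`, `x = x₀ + t • v` the total volume increases at rate at least
`δ * |E|`, while at each time with `|A ∩ Ω| = |E|` the escape rate is only `O(δ * t)`.  So
`|A ∩ Ω| ≥ |E|` persists up to a time `τ` independent of `δ` and `x₀`.  Letting `δ → 0`, if the
translate `x₀ + E` is contained in `Ω` up to a null set, so is `x₀ + τ • v + E` (`exists_step`).
Iterating, arbitrarily far translates of `E` are almost contained in `Ω`, which is absurd for a
bounded set.
-/

open MeasureTheory Metric Set Filter

/-- The relative perimeter `P(E, Ω) = liminf_{ε → 0⁺} (|E_ε ∩ Ω| - |E ∩ Ω|)/ε`, where `E_ε`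
is the open `ε`-neighborhood of `E`. -/
noncomputable def relPerimeter (n : ℕ) (E Ω : Set (EuclideanSpace ℝ (Fin n))) : ENNReal :=
  Filter.liminf
    (fun ε : ℝ => (volume (Metric.thickening ε E ∩ Ω) - volume (E ∩ Ω)) / ENNReal.ofReal ε)
    (nhdsWithin 0 (Set.Ioi 0))

/-! ### Dilated translates -/

/-- The copy `x + l • E` of `E`, dilated by the factor `l` and translated by `x`. -/
def dilate {n : ℕ} (l : ℝ) (x : EuclideanSpace ℝ (Fin n)) (E : Set (EuclideanSpace ℝ (Fin n))) :
    Set (EuclideanSpace ℝ (Fin n)) :=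
  (fun y => x + l • y) '' E

section Dilations

variable {n : ℕ} {E Ω : Set (EuclideanSpace ℝ (Fin n))}

lemma bounded_ne_top {S : Set (EuclideanSpace ℝ (Fin n))} (hS : Bornology.IsBounded S) :
    volume S ≠ ⊤ := hS.measure_lt_top.ne

lemma volume_real_dilate {l : ℝ} (hl : 0 < l) (x : EuclideanSpace ℝ (Fin n))
    (S : Set (EuclideanSpace ℝ (Fin n))) :
    volume.real (dilate l x S) = l ^ n * volume.real S := by
  have h : dilate l x S = (fun y => x + y) '' ((fun y => l • y) '' S) := by
    rw [dilate, image_image]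
  have h2 : volume (dilate l x S) = ENNReal.ofReal (l ^ n) * volume S := by
    rw [h, image_add_left, measure_preimage_add, image_smul, Measure.addHaar_smul,
      finrank_euclideanSpace_fin, abs_of_pos (pow_pos hl n)]
  rw [Measure.real, h2, ENNReal.toReal_mul, ENNReal.toReal_ofReal (pow_pos hl n).le, Measure.real]

lemma isOpen_dilate {l : ℝ} (hl : 0 < l) (x : EuclideanSpace ℝ (Fin n)) (hE : IsOpen E) :
    IsOpen (dilate l x E) := by
  have h : dilate l x E = (fun y => x + y) '' ((fun y => l • y) '' E) := by
    rw [dilate, image_image]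
  rw [h, image_smul]
  exact (isOpenMap_add_left x) _ (hE.smul₀ hl.ne')

lemma bounded_dilate (l : ℝ) (x : EuclideanSpace ℝ (Fin n)) (hE : Bornology.IsBounded E) :
    Bornology.IsBounded (dilate l x E) := by
  obtain ⟨R, hR⟩ := hE.exists_norm_le
  refine isBounded_iff_forall_norm_le.2 ⟨‖x‖ + |l| * R, ?_⟩
  rintro _ ⟨y, hy, rfl⟩
  refine (norm_add_le _ _).trans ?_
  rw [norm_smul, Real.norm_eq_abs]
  have := hR y hy
  gcongr

lemma thickening_dilate_subset {l : ℝ} (hl : 0 < l) (x : EuclideanSpace ℝ (Fin n)) (ε : ℝ) :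
    thickening ε (dilate l x E) ⊆ dilate l x (thickening (ε / l) E) := by
  intro z hz
  obtain ⟨_, ⟨y, hy, rfl⟩, hd⟩ := mem_thickening_iff.1 hz
  refine ⟨l⁻¹ • (z - x), mem_thickening_iff.2 ⟨y, hy, ?_⟩, ?_⟩
  · rw [lt_div_iff₀ hl]
    have : z - (x + l • y) = l • (l⁻¹ • (z - x) - y) := by
      rw [smul_sub, smul_inv_smul₀ hl.ne']; abel
    rw [dist_eq_norm, this, norm_smul, Real.norm_eq_abs, abs_of_pos hl] at hd
    rw [dist_eq_norm]; linarith
  · simp [smul_inv_smul₀ hl.ne']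

lemma dilate_subset_thickening {R l l' ε : ℝ} {x x' : EuclideanSpace ℝ (Fin n)}
    (hR : ∀ y ∈ E, ‖y‖ ≤ R) (h : |l' - l| * R + ‖x' - x‖ < ε) :
    dilate l' x' E ⊆ thickening ε (dilate l x E) := by
  rintro _ ⟨y, hy, rfl⟩
  refine mem_thickening_iff.2 ⟨_, ⟨y, hy, rfl⟩, ?_⟩
  have : x' + l' • y - (x + l • y) = (l' - l) • y + (x' - x) := by
    rw [sub_smul]; abel
  rw [dist_eq_norm, this]
  refine lt_of_le_of_lt (norm_add_le _ _) (lt_of_le_of_lt ?_ h)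
  rw [norm_smul, Real.norm_eq_abs]
  have := hR y hy
  gcongr

/-- Uniform modulus of continuity for the volume of `dilate l x E ∩ Ω` in the parameters. -/
lemma inter_dilate_le {R l l' ε : ℝ} {x x' : EuclideanSpace ℝ (Fin n)}
    (hEo : IsOpen E) (hEb : Bornology.IsBounded E)
    (hR : ∀ y ∈ E, ‖y‖ ≤ R) (hl1 : 1 ≤ l) (hl2 : l ≤ 2)
    (h : |l' - l| * R + ‖x' - x‖ < ε) (hε : 0 < ε) :
    volume.real (dilate l' x' E ∩ Ω) ≤ volume.real (dilate l x E ∩ Ω)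
      + 2 ^ n * (volume.real (thickening ε E) - volume.real E) := by
  have hl : 0 < l := by linarith
  have hb := bounded_dilate l x hEb
  have hsub := dilate_subset_thickening hR h
  have h1 : dilate l' x' E ∩ Ω ⊆
      (dilate l x E ∩ Ω) ∪ (thickening ε (dilate l x E) \ dilate l x E) := by
    rintro z ⟨hz, hzΩ⟩
    by_cases hzA : z ∈ dilate l x E
    · exact Or.inl ⟨hzA, hzΩ⟩
    · exact Or.inr ⟨hsub hz, hzA⟩
  have hfin : volume (thickening ε (dilate l x E)) ≠ ⊤ := bounded_ne_top hb.thickening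
  have h2 := measureReal_mono (μ := volume) h1
    (bounded_ne_top ((hb.subset inter_subset_left).union (hb.thickening.subset sdiff_subset)))
  have h3 := measureReal_union_le (μ := volume) (dilate l x E ∩ Ω)
    (thickening ε (dilate l x E) \ dilate l x E)
  have h4 := measureReal_sdiff (μ := volume) (self_subset_thickening hε (dilate l x E))
    (isOpen_dilate hl x hEo).measurableSet hfin
  have h5 := measureReal_mono (μ := volume) (thickening_dilate_subset (E := E) hl x ε)
    (bounded_ne_top (bounded_dilate l x hEb.thickening))
  rw [volume_real_dilate hl] at h4 h5
  have h6 : volume.real (thickening (ε / l) E) ≤ volume.real (thickening ε E) :=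
    measureReal_mono (thickening_mono (div_le_self hε.le hl1) E) (bounded_ne_top hEb.thickening)
  have h7 : volume.real E ≤ volume.real (thickening ε E) :=
    measureReal_mono (self_subset_thickening hε E) (bounded_ne_top hEb.thickening)
  have h8 : l ^ n * (volume.real (thickening ε E) - volume.real E) ≤
      2 ^ n * (volume.real (thickening ε E) - volume.real E) := by
    have := sub_nonneg.2 h7
    gcongr
  have h9 : l ^ n * volume.real (thickening (ε / l) E) ≤ l ^ n * volume.real (thickening ε E) := by
    gcongr
  linarith

/-- If `|E_ε| → |E|`, the volume of `dilate l x E ∩ Ω` is continuous along continuous paths of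
parameters with dilation factor in `[1, 2]`. -/
lemma continuousOn_inter_dilate (hEo : IsOpen E) (hEb : Bornology.IsBounded E)
    (hV : ∀ κ > 0, ∃ ε > 0, volume.real (thickening ε E) - volume.real E < κ)
    {s : Set ℝ} {l : ℝ → ℝ} {x : ℝ → EuclideanSpace ℝ (Fin n)}
    (hlc : Continuous l) (hxc : Continuous x) (hl : ∀ t ∈ s, l t ∈ Icc (1 : ℝ) 2) :
    ContinuousOn (fun t => volume.real (dilate (l t) (x t) E ∩ Ω)) s := by
  obtain ⟨R, hR⟩ := hEb.exists_norm_le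
  intro t ht
  rw [ContinuousWithinAt, Metric.tendsto_nhds]
  intro κ hκ
  obtain ⟨ε, hε, hεκ⟩ := hV (κ / 2 ^ n) (by positivity)
  rw [lt_div_iff₀ (by positivity)] at hεκ
  have hcont : Tendsto (fun t' => |l t' - l t| * R + ‖x t' - x t‖) (nhdsWithin t s) (nhds 0) := by
    have : Continuous (fun t' => |l t' - l t| * R + ‖x t' - x t‖) := by fun_prop
    have h := (this.tendsto t).mono_left (nhdsWithin_le_nhds (s := s))
    simpa using h
  filter_upwards [hcont.eventually (gt_mem_nhds hε), self_mem_nhdsWithin] with t' h1 h2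
  have ha := inter_dilate_le (Ω := Ω) hEo hEb hR (hl t ht).1 (hl t ht).2 h1 hε
  rw [abs_sub_comm, norm_sub_rev] at h1
  have hb := inter_dilate_le (Ω := Ω) hEo hEb hR (hl t' h2).1 (hl t' h2).2 h1 hε
  rw [Real.dist_eq, abs_lt]
  constructor <;> linarith

end Dilations

/-! ### Difference quotients of the perimeter -/

section Perimeter

variable {n : ℕ} {E F Ω : Set (EuclideanSpace ℝ (Fin n))}

lemma quotient_eq (hΩ : Bornology.IsBounded Ω) (hF : F ⊆ Ω) {ε : ℝ} (hε : 0 < ε) :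
    (volume (thickening ε F ∩ Ω) - volume (F ∩ Ω)) / ENNReal.ofReal ε =
      ENNReal.ofReal ((volume.real (thickening ε F ∩ Ω) - volume.real F) / ε) := by
  rw [inter_eq_left.2 hF, ENNReal.ofReal_div_of_pos hε, ENNReal.ofReal_sub _ measureReal_nonneg,
    ofReal_measureReal (bounded_ne_top (hΩ.subset inter_subset_right)),
    ofReal_measureReal (bounded_ne_top (hΩ.subset hF))]

lemma eventually_growth_ge (hΩ : Bornology.IsBounded Ω) (hF : F ⊆ Ω) {p η : ℝ} (hη : 0 < η)
    (hp : ENNReal.ofReal p ≤ relPerimeter n F Ω) :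
    ∀ᶠ ε in nhdsWithin (0 : ℝ) (Ioi 0),
      (p - η) * ε ≤ volume.real (thickening ε F ∩ Ω) - volume.real F := by
  rcases le_or_gt p η with hpη | hpη
  · filter_upwards [self_mem_nhdsWithin] with ε (hε : 0 < ε)
    have : volume.real F ≤ volume.real (thickening ε F ∩ Ω) :=
      measureReal_mono (subset_inter (self_subset_thickening hε F) hF)
        (bounded_ne_top (hΩ.subset inter_subset_right))
    nlinarith
  · have h1 : ENNReal.ofReal (p - η) < relPerimeter n F Ω :=
      lt_of_lt_of_le ((ENNReal.ofReal_lt_ofReal_iff (by linarith)).2 (by linarith)) hp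
    filter_upwards [eventually_lt_of_lt_liminf h1, self_mem_nhdsWithin] with ε h2 (hε : 0 < ε)
    rw [quotient_eq hΩ hF hε, ENNReal.ofReal_lt_ofReal_iff_of_nonneg (by linarith),
      lt_div_iff₀ hε] at h2
    exact h2.le

lemma frequently_growth_le (hΩ : Bornology.IsBounded Ω) (hF : F ⊆ Ω) {p η : ℝ} (hη : 0 < η)
    (hp0 : 0 ≤ p) (hp : relPerimeter n F Ω ≤ ENNReal.ofReal p) :
    ∃ᶠ ε in nhdsWithin (0 : ℝ) (Ioi 0),
      volume.real (thickening ε F ∩ Ω) - volume.real F ≤ (p + η) * ε := by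
  have h1 : relPerimeter n F Ω < ENNReal.ofReal (p + η) :=
    lt_of_le_of_lt hp ((ENNReal.ofReal_lt_ofReal_iff (by linarith)).2 (by linarith))
  refine ((frequently_lt_of_liminf_lt (by isBoundedDefault) h1).and_eventually
    self_mem_nhdsWithin).mono ?_
  rintro ε ⟨h2, hε : 0 < ε⟩
  rw [quotient_eq hΩ hF hε, ENNReal.ofReal_lt_ofReal_iff (by linarith), div_lt_iff₀ hε] at h2
  exact h2.le

lemma volume_real_ball {r : ℝ} (hr : 0 ≤ r) (hn : n ≠ 0) :
    volume.real (ball (0 : EuclideanSpace ℝ (Fin n)) r) =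
      r ^ n * volume.real (ball (0 : EuclideanSpace ℝ (Fin n)) 1) := by
  have : Nontrivial (EuclideanSpace ℝ (Fin n)) := by
    have : NeZero n := ⟨hn⟩
    infer_instance
  rw [Measure.real, Measure.addHaar_ball _ _ hr, ENNReal.toReal_mul, finrank_euclideanSpace_fin,
    ENNReal.toReal_ofReal (pow_nonneg hr n), Measure.real]

lemma ball_shell_le (hn : n ≠ 0) {a b M : ℝ} (ha : 0 ≤ a) (hab : a ≤ b) (hM : b ≤ M) :
    volume.real (ball (0 : EuclideanSpace ℝ (Fin n)) b ∩ Ω) -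
      volume.real (ball (0 : EuclideanSpace ℝ (Fin n)) a ∩ Ω) ≤
      (n * M ^ (n - 1) * volume.real (ball (0 : EuclideanSpace ℝ (Fin n)) 1)) * (b - a) := by
  have hsub : ball (0 : EuclideanSpace ℝ (Fin n)) b ∩ Ω ⊆
      (ball 0 a ∩ Ω) ∪ (ball 0 b \ ball 0 a) := by
    rintro z ⟨hz, hzΩ⟩
    by_cases hzA : z ∈ ball (0 : EuclideanSpace ℝ (Fin n)) a
    · exact Or.inl ⟨hzA, hzΩ⟩
    · exact Or.inr ⟨hz, hzA⟩
  have h1 := measureReal_mono (μ := volume) hsub (bounded_ne_top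
    ((isBounded_ball.subset inter_subset_left).union (isBounded_ball.subset sdiff_subset)))
  have h2 := measureReal_union_le (μ := volume) (ball (0 : EuclideanSpace ℝ (Fin n)) a ∩ Ω)
    (ball 0 b \ ball 0 a)
  have h3 := measureReal_sdiff (μ := volume)
    (ball_subset_ball hab : ball (0 : EuclideanSpace ℝ (Fin n)) a ⊆ ball 0 b)
    measurableSet_ball (bounded_ne_top isBounded_ball)
  rw [volume_real_ball ha hn, volume_real_ball (ha.trans hab) hn] at h3
  have h4 := (le_abs_self _).trans (abs_pow_sub_pow_le b a n)
  rw [abs_of_nonneg ha, abs_of_nonneg (ha.trans hab), max_eq_left hab,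
    abs_of_nonneg (sub_nonneg.2 hab)] at h4
  have h5 : b ^ (n - 1) ≤ M ^ (n - 1) := pow_le_pow_left₀ (ha.trans hab) hM _
  have h6 : b ^ n - a ^ n ≤ (b - a) * n * M ^ (n - 1) := by
    refine h4.trans ?_
    have := sub_nonneg.2 hab
    gcongr
  have h7 := mul_le_mul_of_nonneg_right h6
    (measureReal_nonneg (μ := volume) (s := ball (0 : EuclideanSpace ℝ (Fin n)) 1))
  linarith

/-- Every volume fraction is realised by a set of finite relative perimeter, namely the trace on
`Ω` of a ball. -/
lemma exists_finite_relPerimeter (hn : n ≠ 0) (hΩo : IsOpen Ω) (hΩ : Bornology.IsBounded Ω)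
    {v : ℝ} (hv0 : 0 ≤ v) (hv : v ≤ volume.real Ω) :
    ∃ F, MeasurableSet F ∧ F ⊆ Ω ∧ volume.real F = v ∧ relPerimeter n F Ω ≠ ⊤ := by
  obtain ⟨R, hR0, hR⟩ := hΩ.exists_pos_norm_lt
  set c := volume.real (ball (0 : EuclideanSpace ℝ (Fin n)) 1) with hc
  have hc0 : 0 ≤ c := measureReal_nonneg
  have hcont : ContinuousOn
      (fun r => volume.real (ball (0 : EuclideanSpace ℝ (Fin n)) r ∩ Ω)) (Icc 0 R) := by
    have hK : 0 ≤ n * R ^ (n - 1) * c := by positivity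
    have key : ∀ a ∈ Icc 0 R, ∀ b ∈ Icc 0 R, a ≤ b →
        dist (volume.real (ball (0 : EuclideanSpace ℝ (Fin n)) a ∩ Ω))
          (volume.real (ball (0 : EuclideanSpace ℝ (Fin n)) b ∩ Ω)) ≤
          n * R ^ (n - 1) * c * dist a b := by
      intro a ha b hb hab
      have h1 := ball_shell_le (Ω := Ω) hn ha.1 hab hb.2
      have h2 : volume.real (ball (0 : EuclideanSpace ℝ (Fin n)) a ∩ Ω) ≤
          volume.real (ball (0 : EuclideanSpace ℝ (Fin n)) b ∩ Ω) :=
        measureReal_mono (inter_subset_inter_left _ (ball_subset_ball hab))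
          (bounded_ne_top (hΩ.subset inter_subset_right))
      rw [dist_comm, Real.dist_eq, abs_of_nonneg (sub_nonneg.2 h2), dist_comm a b, Real.dist_eq,
        abs_of_nonneg (sub_nonneg.2 hab)]
      exact h1
    refine (LipschitzOnWith.of_dist_le_mul (K := ⟨_, hK⟩) ?_).continuousOn
    intro a ha b hb
    rcases le_total a b with hab | hab
    · exact key a ha b hb hab
    · rw [dist_comm, dist_comm a b]
      exact key b hb a ha hab
  obtain ⟨r, hr, hrv⟩ := intermediate_value_Icc hR0.le hcont (show v ∈ Icc _ _ by
    have : ball (0 : EuclideanSpace ℝ (Fin n)) R ∩ Ω = Ω :=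
      inter_eq_right.2 fun z hz => by simpa using hR z hz
    simp only [this]
    simpa using ⟨hv0, hv⟩)
  refine ⟨ball 0 r ∩ Ω, measurableSet_ball.inter hΩo.measurableSet, inter_subset_right, hrv, ?_⟩
  refine ne_top_of_le_ne_top
    (ENNReal.ofReal_ne_top (r := n * (r + 1) ^ (n - 1) * c)) (liminf_le_of_frequently_le ?_)
  refine Eventually.frequently ?_
  filter_upwards [Ioo_mem_nhdsGT (zero_lt_one' ℝ)] with ε hε
  rw [quotient_eq hΩ inter_subset_right hε.1]
  refine ENNReal.ofReal_le_ofReal ?_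
  rw [div_le_iff₀ hε.1]
  have h1 := ball_shell_le (Ω := Ω) hn hr.1 (by linarith [hε.1] : r ≤ r + ε)
    (by linarith [hε.2] : r + ε ≤ r + 1)
  have h2 : thickening ε (ball (0 : EuclideanSpace ℝ (Fin n)) r ∩ Ω) ∩ Ω ⊆
      ball 0 (r + ε) ∩ Ω := by
    refine inter_subset_inter_left _ ?_
    intro z hz
    obtain ⟨y, hy, hd⟩ := mem_thickening_iff.1 hz
    have hy' := mem_ball.1 hy.1
    have := dist_triangle z y 0
    exact mem_ball.2 (by linarith)
  have h3 := measureReal_mono (μ := volume) h2 (bounded_ne_top (hΩ.subset inter_subset_right))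
  rw [add_sub_cancel_left] at h1
  linarith

end Perimeter

/-! ### Escape of volume -/

/-- Let `p` be the perimeter of `E` and suppose that every competitor has perimeter at least `p`.
If `dilate l x E ∩ Ω` is a competitor, then the part of `dilate l x E` outside `Ω` grows at rate at
most `(l ^ (n - 1) - 1) * p` along arbitrarily small `ε`: the whole dilated set has
perimeter `l ^ (n - 1) * p`, of which at least `p` lies inside `Ω`. -/
lemma frequently_outer_growth_le {n : ℕ} {E Ω : Set (EuclideanSpace ℝ (Fin n))} (hn : n ≠ 0)
    (hΩo : IsOpen Ω) (hΩ : Bornology.IsBounded Ω) (hEo : IsOpen E)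
    (hEb : Bornology.IsBounded E) {p : ℝ}
    (hlow : ∀ F, MeasurableSet F → F ⊆ Ω → volume.real F = volume.real E →
      ENNReal.ofReal p ≤ relPerimeter n F Ω)
    (hup : ∀ η > 0, ∃ᶠ ε in nhdsWithin (0 : ℝ) (Ioi 0),
      volume.real (thickening ε E) - volume.real E ≤ (p + η) * ε)
    {l : ℝ} (hl1 : 1 ≤ l) (hl2 : l ≤ 2) {x : EuclideanSpace ℝ (Fin n)}
    (hx : volume.real (dilate l x E ∩ Ω) = volume.real E) {η : ℝ} (hη : 0 < η) :
    ∃ᶠ ε in nhdsWithin (0 : ℝ) (Ioi 0),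
      volume.real (thickening ε (dilate l x E) \ Ω) - volume.real (dilate l x E \ Ω) ≤
        ((l ^ (n - 1) - 1) * p + η) * ε := by
  have hl : 0 < l := by linarith
  set A := dilate l x E with hA
  have hAb : Bornology.IsBounded A := bounded_dilate l x hEb
  have hAo : IsOpen A := isOpen_dilate hl x hEo
  set η' := η / (2 ^ (n - 1) + 1) with hη'
  have hη'0 : 0 < η' := by positivity
  have hη'm : η' * (2 ^ (n - 1) + 1) = η := div_mul_cancel₀ _ (by positivity)
  have hpow : l ^ (n - 1) ≤ 2 ^ (n - 1) := pow_le_pow_left₀ hl.le hl2 _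
  have hln : l ^ n = l ^ (n - 1) * l := (pow_sub_one_mul hn l).symm
  have hlo := eventually_growth_ge hΩ (inter_subset_right (s := A)) hη'0
    (hlow (A ∩ Ω) (hAo.measurableSet.inter hΩo.measurableSet) inter_subset_right hx)
  have htend : Tendsto (fun ε : ℝ => l * ε) (nhdsWithin 0 (Ioi 0)) (nhdsWithin 0 (Ioi 0)) := by
    refine tendsto_nhdsWithin_iff.2 ⟨?_, ?_⟩
    · have : Continuous fun ε : ℝ => l * ε := by fun_prop
      have h := (this.tendsto 0).mono_left (nhdsWithin_le_nhds (s := Ioi 0))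
      simpa using h
    · filter_upwards [self_mem_nhdsWithin] with ε (hε : 0 < ε)
      exact mul_pos hl hε
  refine htend.frequently (((hup η' hη'0).and_eventually
    ((htend.eventually hlo).and self_mem_nhdsWithin)).mono ?_)
  rintro ε ⟨h1, h2, hε : 0 < ε⟩
  have h3 := measureReal_mono (μ := volume) (thickening_dilate_subset (E := E) hl x (l * ε))
    (bounded_ne_top (bounded_dilate l x hEb.thickening))
  rw [volume_real_dilate hl, mul_div_cancel_left₀ _ hl.ne', ← hA] at h3
  have h4 : volume.real A = l ^ n * volume.real E := volume_real_dilate hl x E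
  have h5 := measureReal_inter_add_sdiff (μ := volume) (s := A) hΩo.measurableSet
    (bounded_ne_top hAb)
  have h6 := measureReal_inter_add_sdiff (μ := volume) (s := thickening (l * ε) A)
    hΩo.measurableSet (bounded_ne_top hAb.thickening)
  have h7 : volume.real (thickening (l * ε) (A ∩ Ω) ∩ Ω) ≤
      volume.real (thickening (l * ε) A ∩ Ω) :=
    measureReal_mono (inter_subset_inter_left _ (thickening_subset_of_subset _ inter_subset_left))
      (bounded_ne_top (hΩ.subset inter_subset_right))
  have h8 := mul_le_mul_of_nonneg_left h1 (pow_pos hl n).le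
  have h9 : l ^ n * ((p + η') * ε) = l ^ (n - 1) * (p + η') * (l * ε) := by rw [hln]; ring
  have hlε : 0 < l * ε := mul_pos hl hε
  have h10 : l ^ (n - 1) * (η' * (l * ε)) ≤ 2 ^ (n - 1) * (η' * (l * ε)) := by gcongr
  rw [← hη'm]
  nlinarith

/-- Local propagation: if the translate `x + E` lies in `Ω` up to a null set, then so does every
translate nearby, at a distance that does not depend on `x`.  The translates are compared with
`dilate (1 + δ * t) (x + t • v) E`, whose trace on `Ω` has volume at least `|E|` for
`t ∈ [0, τ]`, and then `δ → 0`. -/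
lemma exists_step {n : ℕ} {E Ω : Set (EuclideanSpace ℝ (Fin n))} (hn : n ≠ 0)
    (hΩo : IsOpen Ω) (hΩ : Bornology.IsBounded Ω) (hEo : IsOpen E)
    (hEb : Bornology.IsBounded E) (hE0 : 0 < volume.real E) {p : ℝ} (hp : 0 ≤ p)
    (hlow : ∀ F, MeasurableSet F → F ⊆ Ω → volume.real F = volume.real E →
      ENNReal.ofReal p ≤ relPerimeter n F Ω)
    (hup : ∀ η > 0, ∃ᶠ ε in nhdsWithin (0 : ℝ) (Ioi 0),
      volume.real (thickening ε E) - volume.real E ≤ (p + η) * ε) :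
    ∃ τ : ℝ, 0 < τ ∧ ∀ x v : EuclideanSpace ℝ (Fin n), ‖v‖ < 1 →
      volume.real (dilate 1 x E ∩ Ω) = volume.real E →
      volume.real (dilate 1 (x + τ • v) E ∩ Ω) = volume.real E := by
  obtain ⟨R, hR0, hR⟩ := hEb.exists_pos_norm_le
  have hV : ∀ κ > 0, ∃ ε > 0, volume.real (thickening ε E) - volume.real E < κ := by
    intro κ hκ
    have : 0 < κ / (p + 1) := by positivity
    obtain ⟨ε, h1, h2⟩ := ((hup 1 one_pos).and_eventually (Ioo_mem_nhdsGT this)).exists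
    refine ⟨ε, h2.1, h1.trans_lt ?_⟩
    have := (lt_div_iff₀ (by linarith : 0 < p + 1)).1 h2.2
    linarith
  -- `C` bounds the relative growth of the perimeter: `l ^ (n - 1) - 1 ≤ C * (l - 1)` on `[1, 2]`.
  set C : ℝ := (n - 1 : ℕ) * 2 ^ (n - 1 - 1) with hC
  have hC0 : 0 ≤ C := by positivity
  have hCl : ∀ l : ℝ, 1 ≤ l → l ≤ 2 → l ^ (n - 1) - 1 ≤ C * (l - 1) := by
    intro l h1 h2
    have h := (le_abs_self _).trans (abs_pow_sub_pow_le l 1 (n - 1))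
    rw [one_pow, abs_one, abs_of_nonneg (by linarith : (0 : ℝ) ≤ l), max_eq_left h1,
      abs_of_nonneg (sub_nonneg.2 h1)] at h
    refine h.trans ?_
    have h3 : l ^ (n - 1 - 1) ≤ (2 : ℝ) ^ (n - 1 - 1) := pow_le_pow_left₀ (by linarith) h2 _
    have := sub_nonneg.2 h1
    calc (l - 1) * ((n - 1 : ℕ) : ℝ) * l ^ (n - 1 - 1)
        ≤ (l - 1) * ((n - 1 : ℕ) : ℝ) * 2 ^ (n - 1 - 1) := by gcongr
      _ = C * (l - 1) := by rw [hC]; ring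
  set e := volume.real E with he
  set τ : ℝ := min 1 (e / (4 * (C * p + 1))) with hτ
  have hCp : 0 ≤ C * p := mul_nonneg hC0 hp
  have hτ0 : 0 < τ := lt_min one_pos (by positivity)
  have hτ1 : τ ≤ 1 := min_le_left _ _
  have hτ2 : τ * (C * p) ≤ e / 4 := by
    have h1 : τ ≤ e / (4 * (C * p + 1)) := min_le_right _ _
    rw [le_div_iff₀ (by positivity)] at h1
    nlinarith
  refine ⟨τ, hτ0, fun x v hv hx => ?_⟩
  have hmain : ∀ δ : ℝ, 0 < δ → δ ≤ 1 → δ * R ≤ 1 →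
      e ≤ volume.real (dilate (1 + δ * τ) (x + τ • v) E ∩ Ω) := by
    intro δ hδ0 hδ1 hδR
    have hlt : ∀ t ∈ Icc 0 τ, 1 + δ * t ∈ Icc (1 : ℝ) 2 := by
      intro t ht
      constructor <;> nlinarith [ht.1, ht.2]
    have hcont : ContinuousOn (fun t : ℝ => volume.real (dilate (1 + δ * t) (x + t • v) E ∩ Ω))
        (Icc 0 τ) :=
      continuousOn_inter_dilate hEo hEb hV (l := fun t => 1 + δ * t) (x := fun t => x + t • v)
        (by fun_prop) (by fun_prop) hlt
    refine IsClosed.mem_of_ge_of_forall_exists_gt (a := (0 : ℝ)) (b := τ)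
      (s := {t | e ≤ volume.real (dilate (1 + δ * t) (x + t • v) E ∩ Ω)}) ?_ ?_ hτ0.le ?_
    · have := hcont.preimage_isClosed_of_isClosed isClosed_Icc (isClosed_Ici (a := e))
      rwa [inter_comm] at this
    · simp [hx]
    · rintro t ⟨ht, ht0, htτ⟩
      have ht : e ≤ volume.real (dilate (1 + δ * t) (x + t • v) E ∩ Ω) := ht
      have htI : t ∈ Icc 0 τ := ⟨ht0, htτ.le⟩
      rcases ht.lt_or_eq with hlt' | heq
      · have h1 : ∀ᶠ t' in nhdsWithin t (Icc 0 τ),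
            e < volume.real (dilate (1 + δ * t') (x + t' • v) E ∩ Ω) :=
          (hcont t htI).eventually (lt_mem_nhds hlt')
        have h2 : nhdsWithin t (Ioc t τ) ≤ nhdsWithin t (Icc 0 τ) :=
          nhdsWithin_mono _ fun z hz => ⟨ht0.trans hz.1.le, hz.2⟩
        have : (nhdsWithin t (Ioc t τ)).NeBot := by
          rw [nhdsWithin_Ioc_eq_nhdsGT htτ]; infer_instance
        obtain ⟨t', h3, h4⟩ := ((h1.filter_mono h2).and self_mem_nhdsWithin).exists
        exact ⟨t', h3.le, h4⟩
      · obtain ⟨hl1, hl2⟩ := hlt t htI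
        have hl : 0 < 1 + δ * t := by linarith
        have hfreq := frequently_outer_growth_le hn hΩo hΩ hEo hEb hlow hup hl1 hl2 heq.symm
          (show 0 < δ * e / 8 by positivity)
        obtain ⟨ε, hg, hε0, hετ⟩ := (hfreq.and_eventually
          (Ioo_mem_nhdsGT (show (0 : ℝ) < 2 * (τ - t) by linarith))).exists
        -- The step `s = ε / 2` keeps the next set inside the `ε`-neighbourhood of the present one.
        set s := ε / 2 with hs
        have hs0 : 0 < s := by positivity
        have hεs : ε = 2 * s := by rw [hs]; ring
        refine ⟨t + s, ?_, by linarith, by linarith⟩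
        have htsI : t + s ∈ Icc 0 τ := ⟨by linarith, by linarith⟩
        have hl' : 0 < 1 + δ * (t + s) := by linarith [(hlt _ htsI).1]
        have hsub : dilate (1 + δ * (t + s)) (x + (t + s) • v) E ⊆
            thickening ε (dilate (1 + δ * t) (x + t • v) E) := by
          refine dilate_subset_thickening hR ?_
          have h1 : 1 + δ * (t + s) - (1 + δ * t) = δ * s := by ring
          have h2 : x + (t + s) • v - (x + t • v) = s • v := by rw [add_smul]; abel
          rw [h1, h2, norm_smul, Real.norm_eq_abs, abs_of_pos hs0, abs_of_pos (by positivity), hεs]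
          nlinarith
        have h1 := measureReal_inter_add_sdiff (μ := volume)
          (s := dilate (1 + δ * t) (x + t • v) E) hΩo.measurableSet
          (bounded_ne_top (bounded_dilate _ _ hEb))
        have h2 := measureReal_inter_add_sdiff (μ := volume)
          (s := dilate (1 + δ * (t + s)) (x + (t + s) • v) E) hΩo.measurableSet
          (bounded_ne_top (bounded_dilate _ _ hEb))
        rw [volume_real_dilate hl] at h1
        rw [volume_real_dilate hl'] at h2
        have h3 := measureReal_mono (μ := volume) (sdiff_subset_sdiff_left (t := Ω) hsub)
          (bounded_ne_top ((bounded_dilate _ _ hEb).thickening.subset sdiff_subset))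
        have h4 : δ * s ≤ (1 + δ * (t + s)) ^ n - (1 + δ * t) ^ n := by
          have hb : (1 + δ * t) ^ n * (1 + δ * s / (1 + δ * t) * n) ≤ (1 + δ * (t + s)) ^ n := by
            have hq : (1 + δ * (t + s)) = (1 + δ * t) * (1 + δ * s / (1 + δ * t)) := by
              field_simp; ring
            have hq0 : 0 ≤ δ * s / (1 + δ * t) := by positivity
            have := one_add_mul_le_pow (by linarith : -2 ≤ δ * s / (1 + δ * t)) n
            rw [hq, mul_pow]
            refine mul_le_mul_of_nonneg_left ?_ (by positivity)
            linarith
          have hc : (1 + δ * t) ^ n * (δ * s / (1 + δ * t) * n) =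
              (1 + δ * t) ^ (n - 1) * n * (δ * s) := by
            rw [← pow_sub_one_mul hn (1 + δ * t)]; field_simp
          have hd : (1 : ℝ) ≤ (1 + δ * t) ^ (n - 1) * n := by
            have h1 : (1 : ℝ) ≤ (1 + δ * t) ^ (n - 1) := one_le_pow₀ hl1
            have h2 : (1 : ℝ) ≤ n := by exact_mod_cast Nat.one_le_iff_ne_zero.2 hn
            nlinarith
          have : 1 * (δ * s) ≤ (1 + δ * t) ^ (n - 1) * n * (δ * s) := by gcongr
          linarith
        have h5 : ((1 + δ * t) ^ (n - 1) - 1) * p ≤ δ * (e / 4) := by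
          have h6 := mul_le_mul_of_nonneg_right (hCl _ hl1 hl2) hp
          have h7 : t * (C * p) ≤ τ * (C * p) := by gcongr
          have h8 := mul_le_mul_of_nonneg_left (h7.trans hτ2) hδ0.le
          linarith
        have h6 : (((1 + δ * t) ^ (n - 1) - 1) * p + δ * e / 8) * ε ≤
            (δ * (e / 4) + δ * e / 8) * ε := by gcongr
        have h7 := mul_le_mul_of_nonneg_right h4 hE0.le
        have h8 : 0 < δ * e * s := by positivity
        change e ≤ _
        rw [hεs] at h6 hg h3
        linarith
  -- Passage to the limit `δ → 0`.
  have hlim : ContinuousOn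
      (fun δ : ℝ => volume.real (dilate (1 + δ * τ) (x + τ • v) E ∩ Ω)) (Icc 0 1) :=
    continuousOn_inter_dilate hEo hEb hV (l := fun δ => 1 + δ * τ) (x := fun _ => x + τ • v)
      (by fun_prop) (by fun_prop) (fun δ hδ => by
        constructor <;> nlinarith [hδ.1, hδ.2])
  have h0 : Tendsto (fun δ : ℝ => volume.real (dilate (1 + δ * τ) (x + τ • v) E ∩ Ω))
      (nhdsWithin 0 (Ioc 0 1)) (nhds (volume.real (dilate 1 (x + τ • v) E ∩ Ω))) := by
    have h := (hlim 0 ⟨le_rfl, zero_le_one⟩).mono (Ioc_subset_Icc_self)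
    simpa [ContinuousWithinAt] using h
  rw [nhdsWithin_Ioc_eq_nhdsGT one_pos] at h0
  refine le_antisymm ?_ (ge_of_tendsto h0 ?_)
  · have h1 := volume_real_dilate one_pos (x + τ • v) E
    rw [one_pow, one_mul] at h1
    rw [he, ← h1]
    exact measureReal_mono inter_subset_left (bounded_ne_top (bounded_dilate _ _ hEb))
  · filter_upwards [Ioo_mem_nhdsGT (one_pos : (0 : ℝ) < 1),
      Ioo_mem_nhdsGT (by positivity : 0 < 1 / R)] with δ h1 h2
    exact hmain δ h1.1 h1.2.le ((lt_div_iff₀ hR0).1 h2.2).le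

/-- **Isoperimetric sets are never relatively compact.**  If `Ω ⊂ ℝⁿ` is a bounded open
connected set, `0 < α < 1`, and `E ⊆ Ω` is an open isoperimetric set with volume fraction
`α`, then the closure of `E` is not contained in `Ω`. -/
theorem isoperimetric_not_relatively_compact (n : ℕ)
    (Ω : Set (EuclideanSpace ℝ (Fin n))) (hΩopen : IsOpen Ω)
    (hΩbdd : Bornology.IsBounded Ω) (hΩconn : IsConnected Ω)
    (α : ℝ) (hα0 : 0 < α) (hα1 : α < 1)
    (E : Set (EuclideanSpace ℝ (Fin n))) (hEopen : IsOpen E) (hEΩ : E ⊆ Ω)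
    (hEvol : volume E = ENNReal.ofReal α * volume Ω)
    (hiso : ∀ F : Set (EuclideanSpace ℝ (Fin n)), MeasurableSet F → F ⊆ Ω →
      volume F = ENNReal.ofReal α * volume Ω →
      relPerimeter n E Ω ≤ relPerimeter n F Ω) :
    ¬ closure E ⊆ Ω := by
  intro hcl
  have hEb : Bornology.IsBounded E := hΩbdd.subset hEΩ
  have hΩtop := bounded_ne_top hΩbdd
  have hΩ0 : 0 < volume.real Ω :=
    ENNReal.toReal_pos (hΩopen.measure_pos volume hΩconn.nonempty).ne' hΩtop
  have hEr : volume.real E = α * volume.real Ω := by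
    rw [Measure.real, hEvol, ENNReal.toReal_mul, ENNReal.toReal_ofReal hα0.le, Measure.real]
  have hE0 : 0 < volume.real E := by rw [hEr]; positivity
  have hElt : volume.real E < volume.real Ω := by rw [hEr]; nlinarith
  -- In dimension zero a nonempty set is the whole space, so no volume fraction in `(0, 1)` occurs.
  have hn : n ≠ 0 := by
    rintro rfl
    have hne : E.Nonempty := by
      rw [nonempty_iff_ne_empty]; rintro rfl; simp at hE0
    have : E = Ω := by
      rw [Subsingleton.eq_univ_of_nonempty hne, Subsingleton.eq_univ_of_nonempty hΩconn.nonempty]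
    rw [this] at hElt
    exact lt_irrefl _ hElt
  have hiso' : ∀ F, MeasurableSet F → F ⊆ Ω → volume.real F = volume.real E →
      relPerimeter n E Ω ≤ relPerimeter n F Ω := by
    intro F hF hFΩ hFv
    refine hiso F hF hFΩ ?_
    rw [← hEvol, ← ofReal_measureReal (bounded_ne_top (hΩbdd.subset hFΩ)), hFv,
      ofReal_measureReal (bounded_ne_top hEb)]
  have hPfin : relPerimeter n E Ω ≠ ⊤ := by
    obtain ⟨F, hF, hFΩ, hFv, hFfin⟩ :=
      exists_finite_relPerimeter hn hΩopen hΩbdd hE0.le hElt.le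
    exact ne_top_of_le_ne_top hFfin (hiso' F hF hFΩ hFv)
  set p := (relPerimeter n E Ω).toReal with hp
  have hpe : ENNReal.ofReal p = relPerimeter n E Ω := ENNReal.ofReal_toReal hPfin
  have hp0 : 0 ≤ p := ENNReal.toReal_nonneg
  have hcompact : IsCompact (closure E) := hEb.isCompact_closure
  obtain ⟨d, hd0, hd⟩ := hcompact.exists_thickening_subset_open hΩopen hcl
  rw [thickening_closure] at hd
  -- Since `closure E ⊆ Ω`, the perimeter of `E` relative to `Ω` is its perimeter in the space.
  have hup : ∀ η > 0, ∃ᶠ ε in nhdsWithin (0 : ℝ) (Ioi 0),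
      volume.real (thickening ε E) - volume.real E ≤ (p + η) * ε := by
    intro η hη
    refine ((frequently_growth_le hΩbdd hEΩ hη hp0 hpe.ge).and_eventually
      (Ioo_mem_nhdsGT hd0)).mono ?_
    rintro ε ⟨h1, h2⟩
    rwa [inter_eq_left.2 ((thickening_mono h2.2.le E).trans hd)] at h1
  obtain ⟨τ, hτ, hstep⟩ := exists_step hn hΩopen hΩbdd hEopen hEb hE0 hp0
    (fun F hF hFΩ hFv => hpe.le.trans (hiso' F hF hFΩ hFv)) hup
  have : Nontrivial (EuclideanSpace ℝ (Fin n)) := by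
    have : NeZero n := ⟨hn⟩
    infer_instance
  obtain ⟨v, hv⟩ := exists_norm_eq (EuclideanSpace ℝ (Fin n)) (by norm_num : (0 : ℝ) ≤ 1 / 2)
  have hall : ∀ k : ℕ, volume.real (dilate 1 ((k * τ) • v) E ∩ Ω) = volume.real E := by
    intro k
    induction k with
    | zero =>
      have : dilate 1 (((0 : ℕ) * τ) • v) E = E := by simp [dilate]
      rw [this, inter_eq_left.2 hEΩ]
    | succ k ih =>
      have h := hstep _ v (by rw [hv]; norm_num) ih
      rw [← add_smul] at h
      have hk : ((k + 1 : ℕ) : ℝ) * τ = k * τ + τ := by push_cast; ring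
      rw [hk]
      exact h
  obtain ⟨R, hR0, hR⟩ := hΩbdd.exists_pos_norm_le
  obtain ⟨k, hk⟩ := exists_nat_gt (4 * R / τ)
  rw [div_lt_iff₀ hτ] at hk
  have hempty : dilate 1 ((k * τ) • v) E ∩ Ω = ∅ := by
    rw [eq_empty_iff_forall_notMem]
    rintro _ ⟨⟨y, hy, rfl⟩, hz⟩
    have h1 := hR _ (hEΩ hy)
    have h2 := hR _ hz
    have h3 := norm_sub_le ((k * τ) • v + (1 : ℝ) • y) y
    simp only [one_smul, add_sub_cancel_right] at h2 h3
    rw [norm_smul, hv, Real.norm_eq_abs, abs_of_nonneg (by positivity)] at h3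
    linarith
  have := hall k
  rw [hempty, measureReal_empty] at this
  exact hE0.ne this
end
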